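/- arXiv:2405.00778 — 4 statements merged into one kernel-verified Lean document; each statement's English description precedes it below -/
import Mathlib

section
/- Let F be a field and let m, n, r be integers with 3 ≤ m and 0 ≤ r ≤ n. Let A_1, …, A_m ⊆ [n] be sets of size at most r, set E = ∪_{i∈[m]} {i}×A_i ⊆ [m]×[n], and for k ∈ {1,2,3} let S_k = {j ∈ [n] : j belongs to exactly k of the sets A_1,…,A_m}. Then E is independent in the tensor matroid T_{m,n}(3,r,F) if and only if the following five conditions hold: (1) |A_i ∩ A_j ∩ A_k ∩ A_ℓ| = 0 for all distinct i, j, k, ℓ ∈ [m]; (2) |A_i ∖ S_3| + |S_3| ≤ r for all i ∈ [m]; (3) |(A_i ∩ A_j) ∖ S_3| + |(A_k ∩ A_ℓ) ∖ S_3| + |S_3| ≤ r for all distinct i, j, k, ℓ ∈ [m]; (4) |A_i ∖ S_3| + |A_j ∖ S_3| + |S_2 ∖ (S_3 ∪ A_i ∪ A_j)| + 2|S_3| ≤ 2r for all distinct i, j ∈ [m]; (5) |S_1| + 2|S_2| + 3|S_3| ≤ 3r. -/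
open scoped Classical

noncomputable section

/-- The field of fractions of the polynomial ring over `F` in variables
`X i k` (`i ∈ [m]`, `k ∈ [s]`) and `Y j l` (`j ∈ [n]`, `l ∈ [r]`). -/
abbrev TField (F : Type*) [Field F] (m n s r : ℕ) :=
  FractionRing (MvPolynomial ((Fin m × Fin s) ⊕ (Fin n × Fin r)) F)

/-- The vector `u_i ⊗ v_j ∈ K_F^{[s]×[r]}` with `(k,l)`-entry `X_{ik} · Y_{jl}`. -/
noncomputable def tvec (F : Type*) [Field F] (m n s r : ℕ) (e : Fin m × Fin n) :
    Fin s × Fin r → TField F m n s r := fun kl =>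
  algebraMap (MvPolynomial ((Fin m × Fin s) ⊕ (Fin n × Fin r)) F) (TField F m n s r)
      (MvPolynomial.X (Sum.inl (e.1, kl.1))) *
  algebraMap (MvPolynomial ((Fin m × Fin s) ⊕ (Fin n × Fin r)) F) (TField F m n s r)
      (MvPolynomial.X (Sum.inr (e.2, kl.2)))

/-- `E` is independent in the tensor matroid `T_{m,n}(s,r,F)`: the family
`{u_i ⊗ v_j : (i,j) ∈ E}` is linearly independent over `K_F`. -/
def TensorIndep (F : Type*) [Field F] (m n s r : ℕ) (E : Set (Fin m × Fin n)) : Prop :=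
  LinearIndependent (TField F m n s r) (fun e : E => tvec F m n s r e)

/-- `E` is spanning in the tensor matroid `T_{m,n}(s,r,F)`: the family
`{u_i ⊗ v_j : (i,j) ∈ E}` spans `K_F^{[s]×[r]}`. -/
def TensorSpanning (F : Type*) [Field F] (m n s r : ℕ) (E : Set (Fin m × Fin n)) : Prop :=
  Submodule.span (TField F m n s r) (tvec F m n s r '' E) = ⊤

/-- `Smult A k` is the set of `j ∈ [n]` which appear in exactly `k` of the sets `A i`. -/
def Smult {m n : ℕ} (A : Fin m → Finset (Fin n)) (k : ℕ) : Finset (Fin n) :=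
  Finset.univ.filter (fun j => (Finset.univ.filter (fun i => j ∈ A i)).card = k)

section TensorHelpers

open Matrix


theorem rado_aux {K V J C : Type*} [Field K] [AddCommGroup V] [Module K V] [FiniteDimensional K V]
    [Fintype J] (g : J → C → V) : ∀ (N : ℕ) (S : J → Finset C), (∑ j, (S j).card = N) →
    (∀ X : Finset J, X.card ≤ Module.finrank K
      (Submodule.span K {y | ∃ j ∈ X, ∃ c ∈ S j, y = g j c})) →
    ∃ col : J → C, LinearIndependent K (fun j => g j (col j)) := by
  intro N
  induction N using Nat.strong_induction_on with
  | _ N ih =>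
  intro S hS hX
  by_cases hall : ∀ j, (S j).card ≤ 1
  · have hne : ∀ j, (S j).Nonempty := by
      intro j
      by_contra hc
      rw [Finset.not_nonempty_iff_eq_empty] at hc
      have h1 := hX {j}
      have : {y | ∃ j' ∈ ({j} : Finset J), ∃ c ∈ S j', y = g j' c} = ∅ := by
        ext y; simp [hc]
      rw [this] at h1
      simp at h1
    choose col hcol using hne
    refine ⟨col, ?_⟩
    rw [linearIndependent_iff_card_le_finrank_span]
    have h1 := hX Finset.univ
    rw [Finset.card_univ] at h1
    refine h1.trans (le_of_eq ?_)
    unfold Set.finrank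
    have : {y | ∃ j ∈ Finset.univ, ∃ c ∈ S j, y = g j c} = Set.range (fun j => g j (col j)) := by
      ext y
      constructor
      · rintro ⟨j, _, c, hc, rfl⟩
        exact ⟨j, by simp only [Finset.card_le_one.mp (hall j) _ (hcol j) _ hc]⟩
      · rintro ⟨j, rfl⟩
        exact ⟨j, Finset.mem_univ _, col j, hcol j, rfl⟩
    rw [this]
  · push Not at hall
    obtain ⟨j0, hj0⟩ := hall
    obtain ⟨a, ha, b, hb, hab⟩ := Finset.one_lt_card.mp hj0
    have key : ∀ a ∈ S j0, (∃ col : J → C, LinearIndependent K (fun j => g j (col j))) ∨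
        ∃ X : Finset J, j0 ∈ X ∧ Module.finrank K (Submodule.span K
          {y | ∃ j ∈ X, ∃ c ∈ S j, (j = j0 → c ≠ a) ∧ y = g j c}) < X.card := by
      intro a ha
      by_cases h : ∀ X : Finset J, X.card ≤ Module.finrank K
        (Submodule.span K {y | ∃ j ∈ X, ∃ c ∈ (Function.update S j0 ((S j0).erase a)) j, y = g j c})
      · left
        refine ih _ ?_ _ rfl h
        rw [← hS]
        apply Finset.sum_lt_sum
        · intro j _
          by_cases hj : j = j0
          · subst hj; simp [Finset.card_erase_le]
          · simp [hj]
        · exact ⟨j0, Finset.mem_univ _, by simpa using Finset.card_erase_lt_of_mem ha⟩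
      · right
        push Not at h
        obtain ⟨X, hX'⟩ := h
        have e : {y | ∃ j ∈ X, ∃ c ∈ (Function.update S j0 ((S j0).erase a)) j, y = g j c}
            = {y | ∃ j ∈ X, ∃ c ∈ S j, (j = j0 → c ≠ a) ∧ y = g j c} := by
          ext y
          constructor
          · rintro ⟨j, hj, c, hc, rfl⟩
            by_cases hjj : j = j0
            · subst hjj
              simp at hc
              exact ⟨j, hj, c, hc.2, fun _ => hc.1, rfl⟩
            · simp [hjj] at hc
              exact ⟨j, hj, c, hc, fun h => absurd h hjj, rfl⟩
          · rintro ⟨j, hj, c, hc, hca, rfl⟩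
            refine ⟨j, hj, c, ?_, rfl⟩
            by_cases hjj : j = j0
            · subst hjj
              simp [hc, hca rfl]
            · simpa [hjj] using hc
        rw [e] at hX'
        refine ⟨X, ?_, hX'⟩
        by_contra hj
        refine absurd (hX X) (not_le.mpr (lt_of_le_of_lt (Submodule.finrank_mono
          (Submodule.span_mono ?_)) hX'))
        rintro y ⟨j, hj', c, hc, rfl⟩
        exact ⟨j, hj', c, hc, fun h => absurd (h ▸ hj') hj, rfl⟩
    rcases key a ha with h | ⟨Xa, ha0, hXa⟩
    · exact h
    rcases key b hb with h | ⟨Xb, hb0, hXb⟩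
    · exact h
    exfalso
    set P := Submodule.span K {y | ∃ j ∈ Xa, ∃ c ∈ S j, (j = j0 → c ≠ a) ∧ y = g j c}
    set Q := Submodule.span K {y | ∃ j ∈ Xb, ∃ c ∈ S j, (j = j0 → c ≠ b) ∧ y = g j c}
    have h1 := Submodule.finrank_sup_add_finrank_inf_eq P Q
    have h2 : (Xa ∪ Xb).card ≤ Module.finrank K ↥(P ⊔ Q) := by
      refine (hX _).trans (Submodule.finrank_mono (Submodule.span_le.mpr ?_))
      rintro y ⟨j, hj, c, hc, rfl⟩
      by_cases hjj : j = j0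
      · by_cases hca : c = a
        · exact Submodule.mem_sup_right (Submodule.subset_span ⟨j, hjj ▸ hb0, c, hc,
            fun _ => hca ▸ hab, rfl⟩)
        · exact Submodule.mem_sup_left (Submodule.subset_span ⟨j, hjj ▸ ha0, c, hc,
            fun _ => hca, rfl⟩)
      · rcases Finset.mem_union.mp hj with hj | hj
        · exact Submodule.mem_sup_left (Submodule.subset_span ⟨j, hj, c, hc,
            fun h => absurd h hjj, rfl⟩)
        · exact Submodule.mem_sup_right (Submodule.subset_span ⟨j, hj, c, hc,
            fun h => absurd h hjj, rfl⟩)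
    have h3 : ((Xa ∩ Xb).erase j0).card ≤ Module.finrank K ↥(P ⊓ Q) := by
      refine (hX _).trans (Submodule.finrank_mono (Submodule.span_le.mpr ?_))
      rintro y ⟨j, hj, c, hc, rfl⟩
      simp only [Finset.mem_erase, Finset.mem_inter] at hj
      exact ⟨Submodule.subset_span ⟨j, hj.2.1, c, hc, fun h => absurd h hj.1, rfl⟩,
        Submodule.subset_span ⟨j, hj.2.2, c, hc, fun h => absurd h hj.1, rfl⟩⟩
    have h4 := Finset.card_union_add_card_inter Xa Xb
    have h5 := Finset.card_erase_add_one (Finset.mem_inter.mpr ⟨ha0, hb0⟩)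
    omega

/-- Linear matroid union theorem. -/
theorem lin_union {K V J C : Type*} [Field K] [AddCommGroup V] [Module K V] [FiniteDimensional K V]
    [Fintype J] [Fintype C] (h : C → J → V)
    (hX : ∀ X : Finset J, X.card ≤ ∑ c, Module.finrank K (Submodule.span K (h c '' X))) :
    ∃ col : J → C, ∀ c, LinearIndependent K (fun j : {j // col j = c} => h c j) := by
  obtain ⟨col, hcol⟩ := rado_aux (K := K) (V := C → V) (fun j c => Pi.single c (h c j)) _
    (fun _ => Finset.univ) rfl (by
      intro X
      refine (hX X).trans ?_
      have e : Submodule.pi Set.univ (fun c => Submodule.span K (h c '' X)) ≤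
        Submodule.span K {y | ∃ j ∈ X, ∃ c ∈ Finset.univ, y = Pi.single c (h c j)} := by
        rw [← Submodule.iSup_map_single]
        refine iSup_le fun c => ?_
        rw [Submodule.map_span, Submodule.span_le]
        rintro _ ⟨_, ⟨j, hj, rfl⟩, rfl⟩
        exact Submodule.subset_span ⟨j, hj, c, Finset.mem_univ _, rfl⟩
      refine le_trans ?_ (Submodule.finrank_mono e)
      rw [← Module.finrank_pi_fintype K]
      let f : (∀ c, Submodule.span K (h c '' X)) →ₗ[K]
          (Submodule.pi Set.univ (fun c => Submodule.span K (h c '' X))) :=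
        LinearMap.codRestrict _ (LinearMap.pi fun c =>
          (Submodule.subtype _).comp (LinearMap.proj c)) (by
            intro x c _; simp)
      refine LinearMap.finrank_le_finrank_of_injective (f := f) ?_
      intro x y hxy
      funext c
      have := congrFun (congrArg Subtype.val hxy) c
      exact Subtype.ext this)
  refine ⟨col, fun c => ?_⟩
  have h1 := hcol.comp (fun j : {j // col j = c} => (j : J)) Subtype.val_injective
  refine LinearIndependent.of_comp (LinearMap.single K (fun _ : C => V) c) ?_
  have e : (⇑(LinearMap.single K (fun _ : C => V) c) ∘ fun j : {j // col j = c} => h c j) =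
      ((fun j => Pi.single (col j) (h (col j) j)) ∘ fun j : {j // col j = c} => (j : J)) := by
    funext j
    simp [j.2]
  rw [e]
  exact h1

theorem specialize_indep {R K L ι κ : Type*} [CommRing R] [IsDomain R] [Field K] [Algebra R K]
    [IsFractionRing R K] [Field L] [Fintype ι] [Fintype κ] (φ : R →+* L) (M : ι → κ → R)
    (h : LinearIndependent L (fun i k => φ (M i k))) :
    LinearIndependent K (fun i k => algebraMap R K (M i k)) := by
  let A : Matrix ι κ L := fun i k => φ (M i k)
  have hr : A.rank = Fintype.card ι := h.rank_matrix
  obtain ⟨κ', a, ha, hs, hli⟩ := exists_linearIndependent' L A.col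
  have : Finite κ' := Finite.of_injective a ha
  have : Fintype κ' := Fintype.ofFinite κ'
  have hc : Fintype.card κ' = Fintype.card ι := by
    rw [← hr, Matrix.rank_eq_finrank_span_cols, ← hs]
    exact (finrank_span_eq_card hli).symm
  let e : ι ≃ κ' := (Fintype.equivOfCardEq hc).symm
  have hli2 : LinearIndependent L (A.submatrix id (a ∘ e)).col := hli.comp e e.injective
  have hdet : (A.submatrix id (a ∘ e)).det ≠ 0 := by
    have := Matrix.linearIndependent_cols_iff_isUnit.mp hli2
    rw [Matrix.isUnit_iff_isUnit_det] at this
    exact this.ne_zero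
  let B : Matrix ι ι R := fun i k => M i (a (e k))
  have h1 : φ B.det = (A.submatrix id (a ∘ e)).det := by
    rw [RingHom.map_det]; rfl
  have h2 : B.det ≠ 0 := by
    intro h; rw [h] at h1; exact hdet (by rw [← h1, map_zero])
  have h3 : ((algebraMap R K).mapMatrix B).det ≠ 0 := by
    rw [← RingHom.map_det]
    exact fun h => h2 ((map_eq_zero_iff _ (IsFractionRing.injective R K)).mp h)
  have h4 : LinearIndependent K ((algebraMap R K).mapMatrix B).row := by
    rw [Matrix.linearIndependent_rows_iff_isUnit, Matrix.isUnit_iff_isUnit_det]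
    exact h3.isUnit
  refine LinearIndependent.of_comp (LinearMap.funLeft K K (a ∘ e)) ?_
  exact h4


theorem one_le_dim {K : Type*} [Field K] {s : Set (Fin 3 → K)} {y : Fin 3 → K} (hy : y ∈ s)
    (h0 : y ≠ 0) : 1 ≤ Module.finrank K (Submodule.span K s) := by
  rw [Nat.succ_le_iff, Module.finrank_pos_iff]
  exact ⟨⟨⟨y, Submodule.subset_span hy⟩, 0, fun h => h0 (congrArg Subtype.val h)⟩⟩

theorem two_le_dim {K : Type*} [Field K] {s : Set (Fin 3 → K)} {y z : Fin 3 → K} (hy : y ∈ s)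
    (hz : z ∈ s) (h0 : y ⨯₃ z ≠ 0) : 2 ≤ Module.finrank K (Submodule.span K s) := by
  rw [crossProduct_ne_zero_iff_linearIndependent] at h0
  have := finrank_span_eq_card h0
  simp only [Fintype.card_fin] at this
  refine this.symm.le.trans (Submodule.finrank_mono (Submodule.span_mono ?_))
  rintro _ ⟨i, rfl⟩
  fin_cases i <;> simp [hy, hz]

theorem indep3 {K : Type*} [Field K] {y z w : Fin 3 → K} (h0 : y ⬝ᵥ (z ⨯₃ w) ≠ 0) :
    LinearIndependent K ![y, z, w] := by
  rw [triple_product_eq_det] at h0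
  exact Matrix.linearIndependent_rows_iff_isUnit.mpr
    ((Matrix.isUnit_iff_isUnit_det _).mpr h0.isUnit)

theorem three_le_dim {K : Type*} [Field K] {s : Set (Fin 3 → K)} {y z w : Fin 3 → K} (hy : y ∈ s)
    (hz : z ∈ s) (hw : w ∈ s) (h0 : y ⬝ᵥ (z ⨯₃ w) ≠ 0) :
    3 ≤ Module.finrank K (Submodule.span K s) := by
  have := finrank_span_eq_card (indep3 h0)
  simp only [Fintype.card_fin] at this
  refine this.symm.le.trans (Submodule.finrank_mono (Submodule.span_mono ?_))
  rintro _ ⟨i, rfl⟩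
  fin_cases i <;> simp [hy, hz, hw]

/-- general position of points -/
def Gen1 {K : Type*} [Field K] {m : ℕ} (u : Fin m → Fin 3 → K) : Prop :=
  ∀ a b c, a ≠ b → a ≠ c → b ≠ c → u a ⬝ᵥ (u b ⨯₃ u c) ≠ 0

/-- general position of lines -/
def Gen2 {K : Type*} [Field K] {m : ℕ} (u : Fin m → Fin 3 → K) : Prop :=
  ∀ a b c d e f, a ≠ b → c ≠ d → e ≠ f → ¬ (a = c ∧ b = d) → ¬ (a = d ∧ b = c) →
    ¬ (a = e ∧ b = f) → ¬ (a = f ∧ b = e) → ¬ (c = e ∧ d = f) → ¬ (c = f ∧ d = e) →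
    (∀ i, (i = a ∨ i = b) → (i = c ∨ i = d) → ¬ (i = e ∨ i = f)) →
    (u a ⨯₃ u b) ⬝ᵥ ((u c ⨯₃ u d) ⨯₃ (u e ⨯₃ u f)) ≠ 0

theorem Gen1.inc {K : Type*} [Field K] {m : ℕ} {u : Fin m → Fin 3 → K} (h : Gen1 u)
    {a b c : Fin m} (hbc : b ≠ c) (h0 : u a ⬝ᵥ (u b ⨯₃ u c) = 0) : a = b ∨ a = c := by
  by_contra hc
  push Not at hc
  exact h a b c hc.1 hc.2 hbc h0

theorem exists_third {m : ℕ} (hm : 3 ≤ m) (a b : Fin m) : ∃ c, a ≠ c ∧ b ≠ c := by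
  have : (({a, b} : Finset (Fin m))ᶜ).Nonempty := by
    rw [← Finset.card_pos, Finset.card_compl, Fintype.card_fin]
    have := Finset.card_le_two (a := a) (b := b)
    omega
  obtain ⟨c, hc⟩ := this
  simp at hc
  exact ⟨c, fun h => hc.1 h.symm, fun h => hc.2 h.symm⟩

theorem Gen1.cross {K : Type*} [Field K] {m : ℕ} (hm : 3 ≤ m) {u : Fin m → Fin 3 → K} (h : Gen1 u)
    {a b : Fin m} (hab : a ≠ b) : u a ⨯₃ u b ≠ 0 := by
  obtain ⟨c, h1, h2⟩ := exists_third hm a b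
  intro h0
  refine h c a b h1.symm h2.symm hab ?_
  rw [h0]; simp

theorem Gen1.ne_zero {K : Type*} [Field K] {m : ℕ} (hm : 3 ≤ m) {u : Fin m → Fin 3 → K}
    (h : Gen1 u) (a : Fin m) : u a ≠ 0 := by
  obtain ⟨b, h1, _⟩ := exists_third hm a a
  intro h0
  exact h.cross hm h1 (by rw [h0]; simp)

/-- two distinct lines are independent -/
theorem Gen1.cross_cross {K : Type*} [Field K] {m : ℕ} (hm : 3 ≤ m) {u : Fin m → Fin 3 → K}
    (h : Gen1 u) {a b c d : Fin m} (hab : a ≠ b) (hcd : c ≠ d) (h1 : ¬ (a = c ∧ b = d))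
    (h2 : ¬ (a = d ∧ b = c)) : (u a ⨯₃ u b) ⨯₃ (u c ⨯₃ u d) ≠ 0 := by
  intro h0
  have e : (u a ⨯₃ u b) ⨯₃ (u c ⨯₃ u d) = (u a ⬝ᵥ (u c ⨯₃ u d)) • u b
      - (u b ⬝ᵥ (u c ⨯₃ u d)) • u a := by
    ext i; fin_cases i <;> simp [cross_apply, dotProduct, Fin.sum_univ_three] <;> ring
  rw [e] at h0
  have hli := crossProduct_ne_zero_iff_linearIndependent.mp (h.cross hm hab)
  rw [LinearIndependent.pair_iff] at hli
  have := hli (-(u b ⬝ᵥ (u c ⨯₃ u d))) (u a ⬝ᵥ (u c ⨯₃ u d)) (by rw [← h0, neg_smul]; abel)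
  have ha := h.inc hcd this.2
  have hb := h.inc hcd (neg_eq_zero.mp this.1)
  rcases ha with rfl | rfl <;> rcases hb with rfl | rfl <;> simp_all

theorem comb1 {K : Type*} [Field K] {m n r : ℕ} (hm : 3 ≤ m) {A : Fin m → Finset (Fin n)}
    {u : Fin m → Fin 3 → K} (G1 : Gen1 u) {S1 S2 S3 : Finset (Fin n)}
    (d12 : Disjoint S1 S2) (d13 : Disjoint S1 S3) (d23 : Disjoint S2 S3)
    {a1 a2 b2 : Fin n → Fin m} (h1 : ∀ j ∈ S1, ∀ i, j ∈ A i ↔ i = a1 j)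
    (hab : ∀ j ∈ S2, a2 j ≠ b2 j) (h2 : ∀ j ∈ S2, ∀ i, j ∈ A i ↔ i = a2 j ∨ i = b2 j)
    (C2 : ∀ i : Fin m, (A i \ S3).card + S3.card ≤ r)
    (C4 : ∀ i j : Fin m, i ≠ j → (A i \ S3).card + (A j \ S3).card +
            (S2 \ (S3 ∪ A i ∪ A j)).card + 2 * S3.card ≤ 2 * r)
    (C5 : S1.card + 2 * S2.card + 3 * S3.card ≤ 3 * r)
    (hq : S2.card + S3.card ≤ r) (X : Finset (Fin n)) (hX : X ⊆ S1) (hne : X.Nonempty) :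
    X.card + (S2.filter (fun e => ∀ x ∈ X, u (a1 x) ⬝ᵥ (u (a2 e) ⨯₃ u (b2 e)) = 0)).card ≤
      S2.card + (r - S3.card - S2.card) *
        Module.finrank K (Submodule.span K ((fun x => u (a1 x)) '' X)) := by
  obtain ⟨x0, hx0⟩ := hne
  set d := Module.finrank K (Submodule.span K ((fun x => u (a1 x)) '' (X : Set (Fin n)))) with hd
  set Z := S2.filter (fun e => ∀ x ∈ X, u (a1 x) ⬝ᵥ (u (a2 e) ⨯₃ u (b2 e)) = 0) with hZ
  have hZ1 : ∀ e ∈ Z, ∀ x ∈ X, e ∈ A (a1 x) := by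
    intro e he x hx
    rw [hZ, Finset.mem_filter] at he
    exact (h2 e he.1 _).mpr (G1.inc (hab e he.1) (he.2 x hx))
  have hZ2 : Z ⊆ S2 := Finset.filter_subset _ _
  have hmem : ∀ x ∈ X, u (a1 x) ∈ (fun x => u (a1 x)) '' (X : Set (Fin n)) :=
    fun x hx => ⟨x, hx, rfl⟩
  have hXZ : Disjoint X Z := Finset.disjoint_of_subset_left hX (Finset.disjoint_of_subset_right hZ2 d12)
  by_cases c1 : ∀ x ∈ X, a1 x = a1 x0
  · have hd1 : 1 ≤ d := one_le_dim (hmem x0 hx0) (G1.ne_zero hm _)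
    have hs : X ∪ Z ⊆ A (a1 x0) \ S3 := by
      intro j hj
      rw [Finset.mem_sdiff]
      rcases Finset.mem_union.mp hj with hj | hj
      · exact ⟨(h1 j (hX hj) _).mpr (c1 j hj).symm, Finset.disjoint_left.mp d13 (hX hj)⟩
      · exact ⟨hZ1 j hj x0 hx0, Finset.disjoint_left.mp d23 (hZ2 hj)⟩
    have h3 := Finset.card_le_card hs
    rw [Finset.card_union_of_disjoint hXZ] at h3
    have h4 := C2 (a1 x0)
    have h5 := Nat.mul_le_mul_left (r - S3.card - S2.card) hd1
    omega
  push Not at c1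
  obtain ⟨x1, hx1, hx01⟩ := c1
  by_cases c2 : ∀ x ∈ X, a1 x = a1 x0 ∨ a1 x = a1 x1
  · have hd1 : 2 ≤ d := two_le_dim (hmem x0 hx0) (hmem x1 hx1) (G1.cross hm hx01.symm)
    have h4 := C4 (a1 x0) (a1 x1) hx01.symm
    have e1 := Finset.card_union_add_card_inter (A (a1 x0) \ S3) (A (a1 x1) \ S3)
    have e2 : Z.card ≤ ((A (a1 x0) \ S3) ∩ (A (a1 x1) \ S3)).card := by
      refine Finset.card_le_card fun j hj => ?_
      have := Finset.disjoint_left.mp d23 (hZ2 hj)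
      simp [hZ1 j hj x0 hx0, hZ1 j hj x1 hx1, this]
    have e3 : X.card + S2.card ≤ ((A (a1 x0) \ S3) ∪ (A (a1 x1) \ S3)).card +
        (S2 \ (S3 ∪ A (a1 x0) ∪ A (a1 x1))).card := by
      rw [← Finset.card_union_of_disjoint (Finset.disjoint_of_subset_left hX d12)]
      refine le_trans (Finset.card_le_card ?_) (Finset.card_union_le _ _)
      intro j hj
      rcases Finset.mem_union.mp hj with hj | hj
      · have h6 := Finset.disjoint_left.mp d13 (hX hj)
        have h7 : j ∈ A (a1 x0) ∨ j ∈ A (a1 x1) := by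
          rcases c2 j hj with h | h
          · left; exact (h1 j (hX hj) _).mpr h.symm
          · right; exact (h1 j (hX hj) _).mpr h.symm
        simp [h6]; tauto
      · have h6 := Finset.disjoint_left.mp d23 hj
        simp [h6, hj]; tauto
    have h5 := Nat.mul_le_mul_left (r - S3.card - S2.card) hd1
    omega
  push Not at c2
  obtain ⟨x2, hx2, hx02, hx12⟩ := c2
  have hd1 : 3 ≤ d := three_le_dim (hmem x0 hx0) (hmem x1 hx1) (hmem x2 hx2)
    (G1 _ _ _ hx01.symm hx02.symm hx12.symm)
  have hZ0 : Z = ∅ := by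
    rw [Finset.eq_empty_iff_forall_notMem]
    intro e he
    have t0 := (h2 e (hZ2 he) _).mp (hZ1 e he x0 hx0)
    have t1 := (h2 e (hZ2 he) _).mp (hZ1 e he x1 hx1)
    have t2 := (h2 e (hZ2 he) _).mp (hZ1 e he x2 hx2)
    grind
  have h5 := Nat.mul_le_mul_left (r - S3.card - S2.card) hd1
  have h6 := Finset.card_le_card hX
  rw [hZ0, Finset.card_empty]
  omega

theorem comb2 {K : Type*} [Field K] {m n r : ℕ} (hm : 3 ≤ m) {A : Fin m → Finset (Fin n)}
    {u : Fin m → Fin 3 → K} (G1 : Gen1 u) (G2 : Gen2 u) {S1 S2 S3 : Finset (Fin n)}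
    (d12 : Disjoint S1 S2) (d13 : Disjoint S1 S3) (d23 : Disjoint S2 S3)
    {a1 a2 b2 : Fin n → Fin m} (h1 : ∀ j ∈ S1, ∀ i, j ∈ A i ↔ i = a1 j)
    (hab : ∀ j ∈ S2, a2 j ≠ b2 j) (h2 : ∀ j ∈ S2, ∀ i, j ∈ A i ↔ i = a2 j ∨ i = b2 j)
    (C2 : ∀ i : Fin m, (A i \ S3).card + S3.card ≤ r)
    (C3 : ∀ i j k l : Fin m, i ≠ j → i ≠ k → i ≠ l → j ≠ k → j ≠ l → k ≠ l →
          ((A i ∩ A j) \ S3).card + ((A k ∩ A l) \ S3).card + S3.card ≤ r)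
    (C4 : ∀ i j : Fin m, i ≠ j → (A i \ S3).card + (A j \ S3).card +
            (S2 \ (S3 ∪ A i ∪ A j)).card + 2 * S3.card ≤ 2 * r)
    (C5 : S1.card + 2 * S2.card + 3 * S3.card ≤ 3 * r)
    (hq : r ≤ S2.card + S3.card) (hs3 : S3.card ≤ r)
    (X : Finset (Fin n)) (hX : X ⊆ S2) (hne : X.Nonempty) :
    X.card + (S1.filter (fun t => ∀ x ∈ X, u (a1 t) ⬝ᵥ (u (a2 x) ⨯₃ u (b2 x)) = 0)).card ≤
      3 * (r - S3.card) - 2 * S2.card + (S2.card + S3.card - r) *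
        Module.finrank K (Submodule.span K ((fun x => u (a2 x) ⨯₃ u (b2 x)) '' X)) := by
  obtain ⟨x0, hx0⟩ := hne
  set d := Module.finrank K (Submodule.span K
    ((fun x => u (a2 x) ⨯₃ u (b2 x)) '' (X : Set (Fin n)))) with hd
  set Z := S1.filter (fun t => ∀ x ∈ X, u (a1 t) ⬝ᵥ (u (a2 x) ⨯₃ u (b2 x)) = 0) with hZ
  have hZ1 : ∀ t ∈ Z, ∀ x ∈ X, a1 t = a2 x ∨ a1 t = b2 x := by
    intro t ht x hx
    rw [hZ, Finset.mem_filter] at ht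
    exact G1.inc (hab x (hX hx)) (ht.2 x hx)
  have hZ2 : Z ⊆ S1 := Finset.filter_subset _ _
  have hmem : ∀ x ∈ X, u (a2 x) ⨯₃ u (b2 x) ∈ (fun x => u (a2 x) ⨯₃ u (b2 x)) '' (X : Set (Fin n)) :=
    fun x hx => ⟨x, hx, rfl⟩
  have hXZ : Disjoint X Z := Finset.disjoint_of_subset_left hX
    (Finset.disjoint_of_subset_right hZ2 d12.symm)
  have hx0' := hab x0 (hX hx0)
  by_cases c1 : ∀ x ∈ X, (a2 x = a2 x0 ∧ b2 x = b2 x0) ∨ (a2 x = b2 x0 ∧ b2 x = a2 x0)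
  · have hd1 : 1 ≤ d := one_le_dim (hmem x0 hx0) (G1.cross hm hx0')
    have h4 := C4 (a2 x0) (b2 x0) hx0'
    have e1 := Finset.card_union_add_card_inter (A (a2 x0) \ S3) (A (b2 x0) \ S3)
    have e2 : X.card ≤ ((A (a2 x0) \ S3) ∩ (A (b2 x0) \ S3)).card := by
      refine Finset.card_le_card fun j hj => ?_
      have h6 := Finset.disjoint_left.mp d23 (hX hj)
      have := c1 j hj
      simp only [Finset.mem_inter, Finset.mem_sdiff, h2 j (hX hj)]
      grind
    have e3 : Z.card + S2.card ≤ ((A (a2 x0) \ S3) ∪ (A (b2 x0) \ S3)).card +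
        (S2 \ (S3 ∪ A (a2 x0) ∪ A (b2 x0))).card := by
      rw [← Finset.card_union_of_disjoint (Finset.disjoint_of_subset_left hZ2 d12)]
      refine le_trans (Finset.card_le_card ?_) (Finset.card_union_le _ _)
      intro j hj
      rcases Finset.mem_union.mp hj with hj | hj
      · have h6 := Finset.disjoint_left.mp d13 (hZ2 hj)
        have h7 := hZ1 j hj x0 hx0
        simp only [Finset.mem_union, Finset.mem_sdiff, h1 j (hZ2 hj)]
        grind
      · have h6 := Finset.disjoint_left.mp d23 hj
        simp [h6, hj]; tauto
    have h5 := Nat.mul_le_mul_left (S2.card + S3.card - r) hd1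
    omega
  push Not at c1
  obtain ⟨x1, hx1, hx01, hx01'⟩ := c1
  have hx1' := hab x1 (hX hx1)
  have hd2 : 2 ≤ d := two_le_dim (hmem x0 hx0) (hmem x1 hx1)
    (G1.cross_cross hm hx0' hx1' (by grind) (by grind))
  have h52 := Nat.mul_le_mul_left (S2.card + S3.card - r) hd2
  -- final case
  have fin : (∃ x2 ∈ X, (u (a2 x0) ⨯₃ u (b2 x0)) ⬝ᵥ ((u (a2 x1) ⨯₃ u (b2 x1)) ⨯₃
      (u (a2 x2) ⨯₃ u (b2 x2))) ≠ 0) → X.card + Z.card ≤ 3 * (r - S3.card) - 2 * S2.card +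
        (S2.card + S3.card - r) * d := by
    rintro ⟨x2, hx2, hne⟩
    have hd3 : 3 ≤ d := three_le_dim (hmem x0 hx0) (hmem x1 hx1) (hmem x2 hx2) hne
    have hZ0 : Z = ∅ := by
      rw [Finset.eq_empty_iff_forall_notMem]
      intro t ht
      rw [hZ, Finset.mem_filter] at ht
      have hM : ![u (a2 x0) ⨯₃ u (b2 x0), u (a2 x1) ⨯₃ u (b2 x1), u (a2 x2) ⨯₃ u (b2 x2)] *ᵥ
          u (a1 t) = 0 := by
        ext i
        fin_cases i
        · simpa [Matrix.mulVec, dotProduct_comm] using ht.2 x0 hx0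
        · simpa [Matrix.mulVec, dotProduct_comm] using ht.2 x1 hx1
        · simpa [Matrix.mulVec, dotProduct_comm] using ht.2 x2 hx2
      rw [triple_product_eq_det] at hne
      exact G1.ne_zero hm _ (Matrix.eq_zero_of_mulVec_eq_zero hne hM)
    have h5 := Nat.mul_le_mul_left (S2.card + S3.card - r) hd3
    have h6 := Finset.card_le_card hX
    rw [hZ0, Finset.card_empty]
    omega
  by_cases c2 : ∃ v, (v = a2 x0 ∨ v = b2 x0) ∧ (v = a2 x1 ∨ v = b2 x1)
  · obtain ⟨v, hv0, hv1⟩ := c2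
    by_cases c3 : ∀ x ∈ X, v = a2 x ∨ v = b2 x
    · have hs : X ∪ Z ⊆ A v \ S3 := by
        intro j hj
        rw [Finset.mem_sdiff]
        rcases Finset.mem_union.mp hj with hj | hj
        · exact ⟨(h2 j (hX hj) _).mpr (c3 j hj), Finset.disjoint_left.mp d23 (hX hj)⟩
        · refine ⟨(h1 j (hZ2 hj) _).mpr ?_, Finset.disjoint_left.mp d13 (hZ2 hj)⟩
          have t0 := hZ1 j hj x0 hx0
          have t1 := hZ1 j hj x1 hx1
          grind
      have h3 := Finset.card_le_card hs
      rw [Finset.card_union_of_disjoint hXZ] at h3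
      have h4 := C2 v
      omega
    · push Not at c3
      obtain ⟨x2, hx2, hx2v⟩ := c3
      have hx2' := hab x2 (hX hx2)
      exact fin ⟨x2, hx2, G2 _ _ _ _ _ _ hx0' hx1' hx2' (by grind) (by grind) (by grind)
        (by grind) (by grind) (by grind) (by grind)⟩
  · push Not at c2
    by_cases c3 : ∀ x ∈ X, ((a2 x = a2 x0 ∧ b2 x = b2 x0) ∨ (a2 x = b2 x0 ∧ b2 x = a2 x0)) ∨
      ((a2 x = a2 x1 ∧ b2 x = b2 x1) ∨ (a2 x = b2 x1 ∧ b2 x = a2 x1))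
    · have hZ0 : Z = ∅ := by
        rw [Finset.eq_empty_iff_forall_notMem]
        intro t ht
        have t0 := hZ1 t ht x0 hx0
        have t1 := hZ1 t ht x1 hx1
        grind
      have hs : X ⊆ ((A (a2 x0) ∩ A (b2 x0)) \ S3) ∪ ((A (a2 x1) ∩ A (b2 x1)) \ S3) := by
        intro j hj
        have h6 := Finset.disjoint_left.mp d23 (hX hj)
        have := c3 j hj
        simp only [Finset.mem_inter, Finset.mem_sdiff, Finset.mem_union, h2 j (hX hj)]
        grind
      have h3 := (Finset.card_le_card hs).trans (Finset.card_union_le _ _)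
      have h4 := C3 (a2 x0) (b2 x0) (a2 x1) (b2 x1) hx0' (by grind) (by grind) (by grind)
        (by grind) hx1'
      rw [hZ0, Finset.card_empty]
      omega
    · push Not at c3
      obtain ⟨x2, hx2, hx2v⟩ := c3
      have hx2' := hab x2 (hX hx2)
      exact fin ⟨x2, hx2, G2 _ _ _ _ _ _ hx0' hx1' hx2' (by grind) (by grind) (by grind)
        (by grind) (by grind) (by grind) (by grind)⟩


/-- indicator of a proposition -/
def pind (K : Type*) [Field K] (p : Prop) : K := if p then 1 else 0

theorem sum_fiber {K C : Type*} [Field K] {n : ℕ} (S : Finset (Fin n)) (col : {j // j ∈ S} → C)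
    (c : C) (w : Fin n → K) (x : Fin n → Fin 3 → K) :
    ∑ j, (w j * pind K (∃ hj : j ∈ S, col ⟨j, hj⟩ = c)) • x j =
      ∑ jj : {jj : {j // j ∈ S} // col jj = c}, w jj.1 • x jj.1 := by
  simp only [pind, mul_ite, mul_one, mul_zero]
  simp only [ite_smul, zero_smul]
  rw [← Finset.sum_filter]
  symm
  refine Finset.sum_bij (fun jj _ => (jj.1 : Fin n)) ?_ ?_ ?_ ?_
  · rintro ⟨⟨j, hj⟩, h⟩ _
    simp only [Finset.mem_filter, Finset.mem_univ, true_and]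
    exact ⟨hj, h⟩
  · rintro ⟨⟨j, hj⟩, h⟩ _ ⟨⟨j', hj'⟩, h'⟩ _ h3
    simpa using h3
  · intro j hj
    simp only [Finset.mem_filter, Finset.mem_univ, true_and] at hj
    obtain ⟨hj, h⟩ := hj
    exact ⟨⟨⟨j, hj⟩, h⟩, Finset.mem_univ _, rfl⟩
  · intro _ _; rfl

theorem sum_fiber1 {K C : Type*} [Field K] {n : ℕ} (S : Finset (Fin n)) (col : {j // j ∈ S} → C)
    (c : C) (x : Fin n → Fin 3 → K) :
    ∑ j, (pind K (∃ hj : j ∈ S, col ⟨j, hj⟩ = c)) • x j =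
      ∑ jj : {jj : {j // j ∈ S} // col jj = c}, x jj.1 := by
  simpa using sum_fiber S col c (fun _ => 1) x

theorem sum_pt {K : Type*} [Field K] {n : ℕ} (t : Fin n) (x : Fin n → Fin 3 → K) :
    ∑ j, pind K (j = t) • x j = x t := by
  simp [pind, ite_smul]

theorem transport {K γ : Type*} [Field K] [Fintype γ] {n r : ℕ} (hc : Fintype.card γ = r)
    (v : Fin n → γ → K) : ∃ v' : Fin n → Fin r → K, ∀ x : Fin n → Fin 3 → K,
      (∀ l, ∑ j, v' j l • x j = 0) → (∀ l, ∑ j, v j l • x j = 0) := by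
  let e : γ ≃ Fin r := Fintype.equivFinOfCardEq hc
  refine ⟨fun j l => v j (e.symm l), fun x h l => ?_⟩
  simpa using h (e l)

theorem span_single {K J : Type*} [Field K] (X : Finset J) (g : J → K) :
    1 ≤ Module.finrank K (Submodule.span K
      ((fun x => (Pi.single 0 (g x) : Fin 3 → K)) '' (X : Set J))) +
      (if ∀ x ∈ X, g x = 0 then 1 else 0) := by
  split_ifs with h
  · omega
  · push Not at h
    obtain ⟨x, hx, hg⟩ := h
    exact one_le_dim ⟨x, hx, rfl⟩ (by simpa using hg)

/-- count the rank one slots -/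
theorem span_count {K : Type*} [Field K] {n : ℕ} (S T : Finset (Fin n)) (X : Finset {j // j ∈ T})
    (g : Fin n → Fin n → K) :
    S.card ≤ (∑ e : {j // j ∈ S}, Module.finrank K (Submodule.span K
        ((fun x : {j // j ∈ T} => (Pi.single 0 (g e x) : Fin 3 → K)) '' (X : Set {j // j ∈ T})))) +
      (S.filter (fun e => ∀ x ∈ (X.map ⟨Subtype.val,
        Subtype.val_injective⟩ : Finset (Fin n)), g e x = 0)).card := by
  rw [Finset.sum_coe_sort S (fun e => Module.finrank K (Submodule.span K
        ((fun x : {j // j ∈ T} => (Pi.single 0 (g e x) : Fin 3 → K)) '' (X : Set {j // j ∈ T})))),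
    Finset.card_filter, ← Finset.sum_add_distrib, Finset.card_eq_sum_ones]
  refine Finset.sum_le_sum fun e _ => ?_
  refine (span_single X (fun x => g e x)).trans ?_
  simp only [Finset.mem_map, Function.Embedding.coeFn_mk, forall_exists_index, and_imp,
        forall_apply_eq_imp_iff₂]
  split_ifs <;> rfl

theorem full_count {K : Type*} [Field K] {n k : ℕ} (T : Finset (Fin n)) (X : Finset {j // j ∈ T})
    (g : Fin n → Fin 3 → K) :
    ∑ _e : Fin k, Module.finrank K (Submodule.span K
        ((fun x : {j // j ∈ T} => g x) '' (X : Set {j // j ∈ T}))) = k *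
        Module.finrank K (Submodule.span K (g ''
          (X.map ⟨Subtype.val, Subtype.val_injective⟩ : Finset (Fin n)))) := by
  rw [Finset.sum_const, Finset.card_univ, Fintype.card_fin, smul_eq_mul]
  have : (g '' (X.map ⟨Subtype.val, Subtype.val_injective⟩ : Finset (Fin n))) =
      ((fun x : {j // j ∈ T} => g x) '' (X : Set {j // j ∈ T})) := by
    ext y; simp
  rw [this]

theorem core1 {K : Type*} [Field K] {m n r : ℕ} (hm : 3 ≤ m) {A : Fin m → Finset (Fin n)}
    {u : Fin m → Fin 3 → K} (G1 : Gen1 u) {S1 S2 S3 : Finset (Fin n)}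
    (d12 : Disjoint S1 S2) (d13 : Disjoint S1 S3) (d23 : Disjoint S2 S3)
    {a1 a2 b2 : Fin n → Fin m} (h1 : ∀ j ∈ S1, ∀ i, j ∈ A i ↔ i = a1 j)
    (hab : ∀ j ∈ S2, a2 j ≠ b2 j) (h2 : ∀ j ∈ S2, ∀ i, j ∈ A i ↔ i = a2 j ∨ i = b2 j)
    (C2 : ∀ i : Fin m, (A i \ S3).card + S3.card ≤ r)
    (C4 : ∀ i j : Fin m, i ≠ j → (A i \ S3).card + (A j \ S3).card +
            (S2 \ (S3 ∪ A i ∪ A j)).card + 2 * S3.card ≤ 2 * r)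
    (C5 : S1.card + 2 * S2.card + 3 * S3.card ≤ 3 * r)
    (hq : S2.card + S3.card ≤ r) :
    ∃ v : Fin n → Fin r → K, ∀ x : Fin n → Fin 3 → K,
      (∀ j ∈ S1, ∃ c : K, x j = c • u (a1 j)) →
      (∀ j ∈ S2, x j ⬝ᵥ (u (a2 j) ⨯₃ u (b2 j)) = 0) →
      (∀ j, j ∉ S1 → j ∉ S2 → j ∉ S3 → x j = 0) →
      (∀ l, ∑ j, v j l • x j = 0) → ∀ j, x j = 0 := by
  let h : ({j // j ∈ S2} ⊕ Fin (r - S3.card - S2.card)) → {j // j ∈ S1} → (Fin 3 → K) :=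
    Sum.elim (fun e x => Pi.single 0 (u (a1 x) ⬝ᵥ (u (a2 e) ⨯₃ u (b2 e)))) (fun _ x => u (a1 x))
  obtain ⟨col, hcol⟩ := lin_union (K := K) h (by
    intro X
    rcases X.eq_empty_or_nonempty with rfl | hne
    · simp
    have hk := comb1 hm G1 d12 d13 d23 h1 hab h2 C2 C4 C5 hq (X.map ⟨Subtype.val,
      Subtype.val_injective⟩) (by
        intro j hj
        simp at hj
        exact hj.1) (by simpa using hne)
    rw [Fintype.sum_sum_type]
    have e1 := full_count (k := r - S3.card - S2.card) S1 X (fun x => u (a1 x))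
    have e2 := span_count S2 S1 X (fun e x => u (a1 x) ⬝ᵥ (u (a2 e) ⨯₃ u (b2 e)))
    rw [Finset.card_map] at hk
    refine le_trans ?_ (Nat.add_le_add (Nat.sub_le_iff_le_add.mpr e2) e1.ge)
    omega)
  let v : Fin n → ({j // j ∈ S3} ⊕ ({j // j ∈ S2} ⊕ Fin (r - S3.card - S2.card))) → K :=
    fun j => Sum.elim (fun t => pind K (j = t))
      (Sum.elim (fun e => pind K (j = e) + pind K (∃ hj : j ∈ S1, col ⟨j, hj⟩ = Sum.inl e))
        (fun k => pind K (∃ hj : j ∈ S1, col ⟨j, hj⟩ = Sum.inr k)))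
  obtain ⟨v', hv'⟩ := transport (r := r) (by simp; omega) v
  refine ⟨v', fun x hx1 hx2 hx0 hsum => ?_⟩
  have hs := hv' x hsum
  clear hsum hv'
  choose! cc hcc using hx1
  have k3 : ∀ j ∈ S3, x j = 0 := by
    intro t ht
    have := hs (Sum.inl ⟨t, ht⟩)
    simpa only [v, Sum.elim_inl, sum_pt] using this
  have k1 : ∀ j ∈ S1, x j = 0 := by
    intro j hj
    have hli := Fintype.linearIndependent_iff.mp (hcol (col ⟨j, hj⟩)) (fun jj => cc jj.1)
    have : cc j = 0 := by
      refine hli ?_ ⟨⟨j, hj⟩, rfl⟩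
      rcases hc : col ⟨j, hj⟩ with e | k
      · have h3 := hs (Sum.inr (Sum.inl e))
        simp only [v, Sum.elim_inl, Sum.elim_inr, add_smul, Finset.sum_add_distrib, sum_pt,
          sum_fiber1] at h3
        have h4 := congrArg (fun y => y ⬝ᵥ (u (a2 e) ⨯₃ u (b2 e))) h3
        simp only [add_dotProduct, hx2 e e.2, sum_dotProduct, zero_dotProduct, zero_add] at h4
        have h5 : ∀ jj : {jj : {j // j ∈ S1} // col jj = Sum.inl e}, x jj.1 ⬝ᵥ
            (u (a2 e) ⨯₃ u (b2 e)) = cc jj.1 * (u (a1 jj.1) ⬝ᵥ (u (a2 e) ⨯₃ u (b2 e))) := by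
          intro jj
          rw [hcc jj.1 jj.1.2, smul_dotProduct, smul_eq_mul]
        simp only [h5] at h4
        ext i
        simp only [h, Sum.elim_inl, Finset.sum_apply, Pi.smul_apply, Pi.zero_apply, smul_eq_mul]
        by_cases hi : i = 0
        · subst hi
          simp only [Pi.single_eq_same]
          convert h4
        · simp [hi]
      · have h3 := hs (Sum.inr (Sum.inr k))
        simp only [v, Sum.elim_inr, sum_fiber1] at h3
        simp only [h, Sum.elim_inr]
        rw [← h3]
        exact Finset.sum_congr (by ext; simp) fun jj _ => (hcc jj.1 jj.1.2).symm
    rw [hcc j hj, this, zero_smul]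
  have k2 : ∀ j ∈ S2, x j = 0 := by
    intro e he
    have h3 := hs (Sum.inr (Sum.inl ⟨e, he⟩))
    simp only [v, Sum.elim_inl, Sum.elim_inr, add_smul, Finset.sum_add_distrib, sum_pt,
          sum_fiber1] at h3
    rw [Finset.sum_eq_zero, add_zero] at h3
    · exact h3
    · intro jj _
      rw [k1 _ jj.1.2]
  intro j
  by_cases j1 : j ∈ S1
  · exact k1 j j1
  by_cases j2 : j ∈ S2
  · exact k2 j j2
  by_cases j3 : j ∈ S3
  · exact k3 j j3
  exact hx0 j j1 j2 j3


theorem tri {K ι : Type*} [Field K] [Fintype ι] (f x : ι → Fin 3 → K) (τ : ι → K)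
    (hτ : Function.Injective τ) (hf : LinearIndependent K f) (hx : ∀ i, x i ⬝ᵥ f i = 0)
    (s0 : ∑ i, x i = 0) (s1 : ∑ i, τ i • x i = 0) : ∀ i, x i = 0 := by
  intro i
  have hD : ∀ k, ∑ j, (τ j - τ k) • x j = 0 := by
    intro k
    simp only [sub_smul, Finset.sum_sub_distrib, ← Finset.smul_sum, s0, s1, smul_zero, sub_zero]
  by_cases c1 : ∀ j, j = i
  · rw [Finset.sum_eq_single i (fun j _ h => absurd (c1 j) h) (by simp)] at s0
    exact s0
  push Not at c1
  obtain ⟨k, hk⟩ := c1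
  by_cases c2 : ∀ j, j = i ∨ j = k
  · have h1 := hD k
    rw [Finset.sum_eq_single i (by
      intro j _ h
      rcases c2 j with h' | h'
      · exact absurd h' h
      · subst h'; simp) (by simp)] at h1
    rcases smul_eq_zero.mp h1 with h | h
    · exact absurd (hτ (sub_eq_zero.mp h)).symm hk
    · exact h
  push Not at c2
  obtain ⟨l, hli, hlk⟩ := c2
  have hcard : Fintype.card ι ≤ 3 := by
    have := hf.fintype_card_le_finrank
    simpa using this
  have hu : (Finset.univ : Finset ι) = {i, k, l} := by
    symm
    apply Finset.eq_univ_of_card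
    have h3 : ({i, k, l} : Finset ι).card = 3 := by
      rw [Finset.card_eq_three]
      exact ⟨i, k, l, hk.symm, hli.symm, hlk.symm, rfl⟩
    have := Finset.card_le_univ ({i, k, l} : Finset ι)
    omega
  have hs : ∀ g : ι → Fin 3 → K, ∑ j, g j = g i + (g k + g l) := by
    intro g
    rw [hu, Finset.sum_insert (by simp [hk.symm, hli.symm]), Finset.sum_insert (by simp [hlk.symm]),
      Finset.sum_singleton]
  have e1 : x i ⬝ᵥ f l = 0 := by
    have h1 := hD k
    rw [hs] at h1
    have h2 := congrArg (fun y => y ⬝ᵥ f l) h1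
    simp only [add_dotProduct, smul_dotProduct, hx l, sub_self, zero_smul, zero_dotProduct,
      smul_zero, add_zero] at h2
    rcases smul_eq_zero.mp h2 with h | h
    · exact absurd (hτ (sub_eq_zero.mp h)).symm hk
    · exact h
  have e2 : x i ⬝ᵥ f k = 0 := by
    have h1 := hD l
    rw [hs] at h1
    have h2 := congrArg (fun y => y ⬝ᵥ f k) h1
    simp only [add_dotProduct, smul_dotProduct, hx k, sub_self, zero_smul, zero_dotProduct,
      smul_zero, add_zero] at h2
    rcases smul_eq_zero.mp h2 with h | h
    · exact absurd (hτ (sub_eq_zero.mp h)).symm hli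
    · exact h
  have hli3 : LinearIndependent K (Matrix.of ![f i, f k, f l]).row := by
    have hinj : Function.Injective ![i, k, l] := by
      intro a b hab
      fin_cases a <;> fin_cases b <;> simp_all
    have := hf.comp _ hinj
    convert this using 1
    funext a
    fin_cases a <;> rfl
  rw [Matrix.linearIndependent_rows_iff_isUnit, Matrix.isUnit_iff_isUnit_det] at hli3
  refine Matrix.eq_zero_of_mulVec_eq_zero hli3.ne_zero ?_
  ext a
  fin_cases a
  · simpa [Matrix.mulVec, dotProduct_comm] using hx i
  · simpa [Matrix.mulVec, dotProduct_comm] using e2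
  · simpa [Matrix.mulVec, dotProduct_comm] using e1

theorem sub_of_single {K ι : Type*} [Field K] {g : ι → K}
    (h : LinearIndependent K (fun i => (Pi.single 0 (g i) : Fin 3 → K))) :
    (∀ i, g i ≠ 0) ∧ ∀ i j : ι, i = j := by
  have h1 : ∀ i, g i ≠ 0 := by
    intro i hi
    exact h.ne_zero i (by simp [hi])
  refine ⟨h1, fun i j => ?_⟩
  by_contra hij
  have h2 := h.comp ![i, j] (by
    intro a b hab
    fin_cases a <;> fin_cases b <;> simp_all)
  have e : ((fun i => (Pi.single 0 (g i) : Fin 3 → K)) ∘ ![i, j]) =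
      ![Pi.single 0 (g i), Pi.single 0 (g j)] := by
    funext a; fin_cases a <;> rfl
  rw [e, LinearIndependent.pair_iff] at h2
  have := h2 (g j) (-g i) (by
    ext a
    by_cases ha : a = 0
    · subst ha; simp; ring
    · simp [ha])
  exact h1 j this.1

theorem core2 {K : Type*} [Field K] [Infinite K] {m n r : ℕ} (hm : 3 ≤ m)
    {A : Fin m → Finset (Fin n)}
    {u : Fin m → Fin 3 → K} (G1 : Gen1 u) (G2 : Gen2 u) {S1 S2 S3 : Finset (Fin n)}
    (d12 : Disjoint S1 S2) (d13 : Disjoint S1 S3) (d23 : Disjoint S2 S3)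
    {a1 a2 b2 : Fin n → Fin m} (h1 : ∀ j ∈ S1, ∀ i, j ∈ A i ↔ i = a1 j)
    (hab : ∀ j ∈ S2, a2 j ≠ b2 j) (h2 : ∀ j ∈ S2, ∀ i, j ∈ A i ↔ i = a2 j ∨ i = b2 j)
    (C2 : ∀ i : Fin m, (A i \ S3).card + S3.card ≤ r)
    (C3 : ∀ i j k l : Fin m, i ≠ j → i ≠ k → i ≠ l → j ≠ k → j ≠ l → k ≠ l →
          ((A i ∩ A j) \ S3).card + ((A k ∩ A l) \ S3).card + S3.card ≤ r)
    (C4 : ∀ i j : Fin m, i ≠ j → (A i \ S3).card + (A j \ S3).card +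
            (S2 \ (S3 ∪ A i ∪ A j)).card + 2 * S3.card ≤ 2 * r)
    (C5 : S1.card + 2 * S2.card + 3 * S3.card ≤ 3 * r)
    (hq : r ≤ S2.card + S3.card) (hs3 : S3.card ≤ r) :
    ∃ v : Fin n → Fin r → K, ∀ x : Fin n → Fin 3 → K,
      (∀ j ∈ S1, ∃ c : K, x j = c • u (a1 j)) →
      (∀ j ∈ S2, x j ⬝ᵥ (u (a2 j) ⨯₃ u (b2 j)) = 0) →
      (∀ j, j ∉ S1 → j ∉ S2 → j ∉ S3 → x j = 0) →
      (∀ l, ∑ j, v j l • x j = 0) → ∀ j, x j = 0 := by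
  let N := 3 * (r - S3.card) - 2 * S2.card - S1.card
  let h : (({j // j ∈ S1} ⊕ Fin N) ⊕ Fin (S2.card + S3.card - r)) → {j // j ∈ S2} → (Fin 3 → K) :=
    Sum.elim (Sum.elim (fun t x => Pi.single 0 (u (a1 t) ⬝ᵥ (u (a2 x) ⨯₃ u (b2 x))))
      (fun _ _ => Pi.single 0 1)) (fun _ x => u (a2 x) ⨯₃ u (b2 x))
  obtain ⟨col, hcol⟩ := lin_union (K := K) h (by
    intro X
    rcases X.eq_empty_or_nonempty with rfl | hne
    · simp
    have hk := comb2 hm G1 G2 d12 d13 d23 h1 hab h2 C2 C3 C4 C5 hq hs3 (X.map ⟨Subtype.val,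
      Subtype.val_injective⟩) (by
        intro j hj
        simp at hj
        exact hj.1) (by simpa using hne)
    rw [Fintype.sum_sum_type, Fintype.sum_sum_type]
    have e1 := full_count (k := S2.card + S3.card - r) S2 X (fun x => u (a2 x) ⨯₃ u (b2 x))
    have e2 := span_count S1 S2 X (fun t x => u (a1 t) ⬝ᵥ (u (a2 x) ⨯₃ u (b2 x)))
    have e3 : N ≤ ∑ e : Fin N, Module.finrank K (Submodule.span K
        ((fun x : {j // j ∈ S2} => (Pi.single 0 1 : Fin 3 → K)) '' (X : Set {j // j ∈ S2}))) := by
      obtain ⟨x, hx⟩ := hne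
      have : 1 ≤ Module.finrank K (Submodule.span K
        ((fun x : {j // j ∈ S2} => (Pi.single 0 1 : Fin 3 → K)) '' (X : Set {j // j ∈ S2}))) :=
        one_le_dim ⟨x, hx, rfl⟩ (by simp)
      rw [Finset.sum_const, Finset.card_univ, Fintype.card_fin, smul_eq_mul]
      exact Nat.le_mul_of_pos_right _ this
    rw [Finset.card_map] at hk
    refine le_trans ?_ (Nat.add_le_add (Nat.add_le_add (Nat.sub_le_iff_le_add.mpr e2) e3) e1.ge)
    omega)
  let τ : Fin n → K := fun j => Infinite.natEmbedding K j
  have hτ : Function.Injective τ := fun a b hab => Fin.ext ((Infinite.natEmbedding K).injective hab)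
  let v : Fin n → ({j // j ∈ S3} ⊕ (({j // j ∈ S1} ⊕ Fin N) ⊕
      (Fin (S2.card + S3.card - r) × Fin 2))) → K :=
    fun j => Sum.elim (fun t => pind K (j = t))
      (Sum.elim (Sum.elim
        (fun t => pind K (j = t) + pind K (∃ hj : j ∈ S2, col ⟨j, hj⟩ = Sum.inl (Sum.inl t)))
        (fun k => pind K (∃ hj : j ∈ S2, col ⟨j, hj⟩ = Sum.inl (Sum.inr k))))
        (fun k => (if k.2 = 0 then 1 else τ j) * pind K (∃ hj : j ∈ S2, col ⟨j, hj⟩ = Sum.inr k.1)))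
  obtain ⟨v', hv'⟩ := transport (r := r) (by simp; omega) v
  refine ⟨v', fun x hx1 hx2 hx0 hsum => ?_⟩
  have hs := hv' x hsum
  clear hsum hv'
  choose! cc hcc using hx1
  have k3 : ∀ j ∈ S3, x j = 0 := by
    intro t ht
    have := hs (Sum.inl ⟨t, ht⟩)
    simpa only [v, Sum.elim_inl, sum_pt] using this
  have k1 : ∀ j ∈ S1, x j = 0 := by
    intro t ht
    have h3 := hs (Sum.inr (Sum.inl (Sum.inl ⟨t, ht⟩)))
    simp only [v, Sum.elim_inl, Sum.elim_inr, add_smul, Finset.sum_add_distrib, sum_pt,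
          sum_fiber1] at h3
    obtain ⟨g1, g2⟩ := sub_of_single (hcol (Sum.inl (Sum.inl ⟨t, ht⟩)))
    by_cases hem : Nonempty {jj // col jj = Sum.inl (Sum.inl ⟨t, ht⟩)}
    · obtain ⟨j0⟩ := hem
      rw [Finset.sum_eq_single j0 (fun b _ hb => absurd (g2 b j0) hb) (by simp)] at h3
      have h4 := congrArg (fun y => y ⬝ᵥ (u (a2 j0.1) ⨯₃ u (b2 j0.1))) h3
      simp only [add_dotProduct, hx2 j0.1 j0.1.2, zero_dotProduct, add_zero, hcc t ht,
        smul_dotProduct] at h4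
      rcases smul_eq_zero.mp h4 with h5 | h5
      · rw [hcc t ht, h5, zero_smul]
      · exact absurd h5 (g1 j0)
    · rw [not_nonempty_iff] at hem
      rw [Finset.sum_eq_zero (fun b _ => (hem.false b).elim), add_zero] at h3
      exact h3
  have k2 : ∀ j ∈ S2, x j = 0 := by
    intro j hj
    rcases hc : col ⟨j, hj⟩ with (t | k) | k
    · have h3 := hs (Sum.inr (Sum.inl (Sum.inl t)))
      simp only [v, Sum.elim_inl, Sum.elim_inr, add_smul, Finset.sum_add_distrib, sum_pt,
          sum_fiber1] at h3
      obtain ⟨g1, g2⟩ := sub_of_single (hcol (Sum.inl (Sum.inl t)))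
      rw [Finset.sum_eq_single ⟨⟨j, hj⟩, hc⟩ (fun b _ hb => absurd (g2 b _) hb) (by simp),
        k1 t t.2, zero_add] at h3
      exact h3
    · have h3 := hs (Sum.inr (Sum.inl (Sum.inr k)))
      simp only [v, Sum.elim_inl, Sum.elim_inr, sum_fiber1] at h3
      obtain ⟨g1, g2⟩ := sub_of_single (g := fun _ => 1) (hcol (Sum.inl (Sum.inr k)))
      rw [Finset.sum_eq_single ⟨⟨j, hj⟩, hc⟩ (fun b _ hb => absurd (g2 b _) hb) (by simp)] at h3
      exact h3
    · have s0 := hs (Sum.inr (Sum.inr (k, 0)))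
      have s1 := hs (Sum.inr (Sum.inr (k, 1)))
      simp only [v, Sum.elim_inr, sum_fiber, if_true, one_smul] at s0
      simp only [v, Sum.elim_inr, one_ne_zero, if_false, sum_fiber] at s1
      exact tri (ι := {jj // col jj = Sum.inr k}) (fun jj => u (a2 jj.1) ⨯₃ u (b2 jj.1))
        (fun jj => x jj.1) (fun jj => τ jj.1) (fun a b hab => Subtype.ext (Subtype.ext (hτ hab)))
        (hcol (Sum.inr k)) (fun jj => hx2 jj.1 jj.1.2)
        (by convert s0) (by convert s1) ⟨⟨j, hj⟩, hc⟩
  intro j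
  by_cases j1 : j ∈ S1
  · exact k1 j j1
  by_cases j2 : j ∈ S2
  · exact k2 j j2
  by_cases j3 : j ∈ S3
  · exact k3 j j3
  exact hx0 j j1 j2 j3


theorem map_triple {R S : Type*} [CommRing R] [CommRing S] (φ : R →+* S) (a b c : Fin 3 → R) :
    φ (a ⬝ᵥ (b ⨯₃ c)) = (φ ∘ a) ⬝ᵥ ((φ ∘ b) ⨯₃ (φ ∘ c)) := by
  simp [cross_apply, dotProduct, Fin.sum_univ_three]

theorem map_cross {R S : Type*} [CommRing R] [CommRing S] (φ : R →+* S) (a b : Fin 3 → R) :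
    φ ∘ (a ⨯₃ b) = (φ ∘ a) ⨯₃ (φ ∘ b) := by
  ext i; fin_cases i <;> simp [cross_apply]

/-- integer basis vectors -/
def zb (p : Fin 3) : Fin 3 → ℤ := fun k => if k = p then 1 else 0

theorem zb_triple : ∀ p q s : Fin 3, p ≠ q → p ≠ s → q ≠ s →
    (zb p ⬝ᵥ (zb q ⨯₃ zb s) = 1 ∨ zb p ⬝ᵥ (zb q ⨯₃ zb s) = -1) := by
  intro p q s
  simp only [cross_apply, dotProduct, Fin.sum_univ_three, zb]
  revert p q s
  decide

theorem zb_triple2 : (zb 0 ⨯₃ zb 1) ⬝ᵥ ((zb 0 ⨯₃ zb 2) ⨯₃ (zb 1 ⨯₃ zb 2)) = 1 ∨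
    (zb 0 ⨯₃ zb 1) ⬝ᵥ ((zb 0 ⨯₃ zb 2) ⨯₃ (zb 1 ⨯₃ zb 2)) = -1 := by
  simp [cross_apply, dotProduct, Fin.sum_univ_three, zb]

/-- generic vectors in the polynomial ring -/
def pU (F : Type*) [Field F] (m n r : ℕ) (i : Fin m) (k : Fin 3) :
    MvPolynomial ((Fin m × Fin 3) ⊕ (Fin n × Fin r)) F := MvPolynomial.X (Sum.inl (i, k))

def gU (F : Type*) [Field F] (m n r : ℕ) (i : Fin m) (k : Fin 3) :
    FractionRing (MvPolynomial ((Fin m × Fin 3) ⊕ (Fin n × Fin r)) F) :=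
  algebraMap (MvPolynomial ((Fin m × Fin 3) ⊕ (Fin n × Fin r)) F) _
    (MvPolynomial.X (Sum.inl (i, k)))

def evp (F : Type*) [Field F] (m n r : ℕ) (π : Fin m → Fin 3) :
    MvPolynomial ((Fin m × Fin 3) ⊕ (Fin n × Fin r)) F →+* F :=
  MvPolynomial.eval (Sum.elim (fun p => ((zb (π p.1) p.2 : ℤ) : F)) (fun _ => 0))

theorem evp_pU (F : Type*) [Field F] (m n r : ℕ) (π : Fin m → Fin 3) (i : Fin m) :
    evp F m n r π ∘ pU F m n r i = Int.castRingHom F ∘ zb (π i) := by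
  ext k; simp [evp, pU]

theorem pm_ne {F : Type*} [Field F] {z : ℤ} (h : z = 1 ∨ z = -1) : Int.castRingHom F z ≠ 0 := by
  rcases h with rfl | rfl <;> simp

theorem gU_eq (F : Type*) [Field F] (m n r : ℕ) (i : Fin m) : gU F m n r i =
    algebraMap (MvPolynomial ((Fin m × Fin 3) ⊕ (Fin n × Fin r)) F)
    (FractionRing (MvPolynomial ((Fin m × Fin 3) ⊕ (Fin n × Fin r)) F)) ∘ pU F m n r i := rfl

theorem gen1_gU (F : Type*) [Field F] (m n r : ℕ) : Gen1 (gU F m n r) := by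
  intro a b c hab hac hbc h0
  rw [gU_eq, gU_eq, gU_eq, ← map_triple,
    map_eq_zero_iff _ (IsFractionRing.injective _ _)] at h0
  have h1 := congrArg (evp F m n r (fun i => if i = a then 0 else if i = b then 1 else 2)) h0
  rw [map_triple, evp_pU, evp_pU, evp_pU, ← map_triple, map_zero] at h1
  refine pm_ne (zb_triple _ _ _ ?_ ?_ ?_) h1 <;> simp [hab.symm, hac.symm, hbc.symm]

theorem map_triple2 {R S : Type*} [CommRing R] [CommRing S] (φ : R →+* S) (a b c d e f : Fin 3 → R) :
    φ ((a ⨯₃ b) ⬝ᵥ ((c ⨯₃ d) ⨯₃ (e ⨯₃ f))) =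
      ((φ ∘ a) ⨯₃ (φ ∘ b)) ⬝ᵥ (((φ ∘ c) ⨯₃ (φ ∘ d)) ⨯₃ ((φ ∘ e) ⨯₃ (φ ∘ f))) := by
  rw [map_triple, map_cross, map_cross, map_cross]

theorem orient {V : Type*} (Q : V → V → V → V → V → V → Prop)
    (key : ∀ a b c d e f : V, a ≠ b → c ≠ d → e ≠ f → a ≠ d → a ≠ e → a ≠ f → b ≠ c → b ≠ d →
      b ≠ f → c ≠ e → c ≠ f → d ≠ e → Q a b c d e f)
    (sw1 : ∀ a b c d e f, Q a b c d e f → Q b a c d e f)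
    (sw2 : ∀ a b c d e f, Q a b c d e f → Q a b d c e f)
    (sw3 : ∀ a b c d e f, Q a b c d e f → Q a b c d f e)
    (a b c d e f : V) (hab : a ≠ b) (hcd : c ≠ d) (hef : e ≠ f) (n1 : ¬ (a = c ∧ b = d))
    (n2 : ¬ (a = d ∧ b = c)) (n3 : ¬ (a = e ∧ b = f)) (n4 : ¬ (a = f ∧ b = e))
    (n5 : ¬ (c = e ∧ d = f)) (n6 : ¬ (c = f ∧ d = e))
    (ca : (a = c ∨ a = d) → ¬ (a = e ∨ a = f)) (cb : (b = c ∨ b = d) → ¬ (b = e ∨ b = f)) :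
    Q a b c d e f := by
  by_cases s1 : (b = c ∨ b = d) ∨ (a = e ∨ a = f)
  · apply sw1
    by_cases s2 : (d = a ∨ d = b) ∨ (c = e ∨ c = f)
    · apply sw2
      by_cases s3 : (f = a ∨ f = b) ∨ (e = c ∨ e = d)
      · apply sw3
        clear sw1 sw2 sw3
        apply key <;> clear key <;> grind
      · clear sw1 sw2 sw3
        apply key <;> clear key <;> grind
    · by_cases s3 : (f = a ∨ f = b) ∨ (e = c ∨ e = d)
      · apply sw3
        clear sw1 sw2 sw3
        apply key <;> clear key <;> grind
      · clear sw1 sw2 sw3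
        apply key <;> clear key <;> grind
  · by_cases s2 : (d = a ∨ d = b) ∨ (c = e ∨ c = f)
    · apply sw2
      by_cases s3 : (f = a ∨ f = b) ∨ (e = c ∨ e = d)
      · apply sw3
        clear sw1 sw2 sw3
        apply key <;> clear key <;> grind
      · clear sw1 sw2 sw3
        apply key <;> clear key <;> grind
    · by_cases s3 : (f = a ∨ f = b) ∨ (e = c ∨ e = d)
      · apply sw3
        clear sw1 sw2 sw3
        apply key <;> clear key <;> grind
      · clear sw1 sw2 sw3
        apply key <;> clear key <;> grind

theorem sw_one {K : Type*} [Field K] (x y z w t s : Fin 3 → K)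
    (h : (x ⨯₃ y) ⬝ᵥ ((z ⨯₃ w) ⨯₃ (t ⨯₃ s)) ≠ 0) : (y ⨯₃ x) ⬝ᵥ ((z ⨯₃ w) ⨯₃ (t ⨯₃ s)) ≠ 0 := by
  rw [← cross_anticomm x y, neg_dotProduct]; exact neg_ne_zero.mpr h

theorem sw_two {K : Type*} [Field K] (x y z w t s : Fin 3 → K)
    (h : (x ⨯₃ y) ⬝ᵥ ((z ⨯₃ w) ⨯₃ (t ⨯₃ s)) ≠ 0) : (x ⨯₃ y) ⬝ᵥ ((w ⨯₃ z) ⨯₃ (t ⨯₃ s)) ≠ 0 := by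
  rw [← cross_anticomm z w, map_neg, LinearMap.neg_apply, dotProduct_neg]; exact neg_ne_zero.mpr h

theorem sw_three {K : Type*} [Field K] (x y z w t s : Fin 3 → K)
    (h : (x ⨯₃ y) ⬝ᵥ ((z ⨯₃ w) ⨯₃ (t ⨯₃ s)) ≠ 0) : (x ⨯₃ y) ⬝ᵥ ((z ⨯₃ w) ⨯₃ (s ⨯₃ t)) ≠ 0 := by
  rw [← cross_anticomm t s, map_neg, dotProduct_neg]; exact neg_ne_zero.mpr h

theorem gen2_key (F : Type*) [Field F] (m n r : ℕ) (a b c d e f : Fin m) (hab : a ≠ b)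
    (hcd : c ≠ d) (hef : e ≠ f) (had : a ≠ d) (hae : a ≠ e) (haf : a ≠ f) (hbc : b ≠ c)
    (hbd : b ≠ d) (hbf : b ≠ f) (hce : c ≠ e) (hcf : c ≠ f) (hde : d ≠ e) :
      (gU F m n r a ⨯₃ gU F m n r b) ⬝ᵥ ((gU F m n r c ⨯₃ gU F m n r d) ⨯₃
        (gU F m n r e ⨯₃ gU F m n r f)) ≠ 0 := by
  intro h0
  rw [gU_eq, gU_eq, gU_eq, gU_eq, gU_eq, gU_eq, ← map_triple2,
    map_eq_zero_iff _ (IsFractionRing.injective _ _)] at h0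
  have h1 := congrArg (evp F m n r
      (fun i => if i = a ∨ i = c then 0 else if i = b ∨ i = e then 1 else 2)) h0
  rw [map_triple2, map_zero, evp_pU, evp_pU, evp_pU, evp_pU, evp_pU, evp_pU] at h1
  simp only [hab.symm, hcd.symm, hef.symm, had.symm, hae.symm, haf.symm, hbc, hbd.symm, hbf.symm,
      hce.symm, hcf.symm, hde, if_true, if_false, or_true, true_or, or_false, false_or] at h1
  rw [← map_triple2] at h1
  exact pm_ne zb_triple2 h1

theorem gen2_gU (F : Type*) [Field F] (m n r : ℕ) : Gen2 (gU F m n r) := by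
  intro a b c d e f hab hcd hef n1 n2 n3 n4 n5 n6 hcom
  refine orient (fun a b c d e f => (gU F m n r a ⨯₃ gU F m n r b) ⬝ᵥ
    ((gU F m n r c ⨯₃ gU F m n r d) ⨯₃ (gU F m n r e ⨯₃ gU F m n r f)) ≠ 0)
    (gen2_key F m n r) ?_ ?_ ?_ a b c d e f hab hcd hef n1 n2 n3 n4 n5 n6
    (hcom a (Or.inl rfl)) (hcom b (Or.inr rfl))
  · intros; apply sw_one; assumption
  · intros; apply sw_two; assumption
  · intros; apply sw_three; assumption

/-- concrete form of independence -/
def IndC {K : Type*} [Field K] {m n r : ℕ} (u : Fin m → Fin 3 → K) (v : Fin n → Fin r → K)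
    (A : Fin m → Finset (Fin n)) : Prop :=
  ∀ c : Fin n → Fin m → K, (∀ j i, j ∉ A i → c j i = 0) →
    (∀ l, ∑ j, v j l • ∑ i, c j i • u i = 0) → ∀ j i, c j i = 0

theorem sum_E {K : Type*} [Field K] {m n r : ℕ} (u : Fin m → Fin 3 → K) (v : Fin n → Fin r → K)
    (A : Fin m → Finset (Fin n)) (c : Fin n → Fin m → K) (hc : ∀ j i, j ∉ A i → c j i = 0)
    (k : Fin 3) (l : Fin r) :
    (∑ e : {p : Fin m × Fin n | p.2 ∈ A p.1}, c e.1.2 e.1.1 * (u e.1.1 k * v e.1.2 l)) =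
      (∑ j, v j l • ∑ i, c j i • u i) k := by
  have h1 : (∑ e : {p : Fin m × Fin n | p.2 ∈ A p.1}, c e.1.2 e.1.1 * (u e.1.1 k * v e.1.2 l)) =
      ∑ p : Fin m × Fin n, c p.2 p.1 * (u p.1 k * v p.2 l) := by
    rw [← Finset.sum_filter_of_ne (p := fun p : Fin m × Fin n => p.2 ∈ A p.1)]
    · symm
      exact Finset.sum_subtype _ (by simp) (fun p : Fin m × Fin n => c p.2 p.1 * (u p.1 k * v p.2 l))
    · intro p _ hne
      by_contra hp
      exact hne (by rw [hc _ _ hp, zero_mul])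
  rw [h1, Fintype.sum_prod_type_right]
  simp only [Finset.sum_apply, Pi.smul_apply, smul_eq_mul, Finset.mul_sum]
  refine Finset.sum_congr rfl fun j _ => Finset.sum_congr rfl fun i _ => ?_
  ring

theorem indC_iff {K : Type*} [Field K] {m n r : ℕ} (u : Fin m → Fin 3 → K) (v : Fin n → Fin r → K)
    (A : Fin m → Finset (Fin n)) :
    LinearIndependent K (fun e : {p : Fin m × Fin n | p.2 ∈ A p.1} =>
      fun kl : Fin 3 × Fin r => u e.1.1 kl.1 * v e.1.2 kl.2) ↔ IndC u v A := by
  rw [Fintype.linearIndependent_iff]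
  constructor
  · intro h c hc hs j i
    by_cases hj : j ∈ A i
    · refine h (fun e => c e.1.2 e.1.1) ?_ ⟨(i, j), hj⟩
      ext ⟨k, l⟩
      have := sum_E u v A c hc k l
      rw [hs l] at this
      simpa [Finset.sum_apply] using this
    · exact hc j i hj
  · intro h g hg e
    have hc : ∀ j i, j ∉ A i → (fun j i => if hj : j ∈ A i then g ⟨(i, j), hj⟩ else 0) j i = 0 := by
      intro j i hj; simp [hj]
    have h1 := h (fun j i => if hj : j ∈ A i then g ⟨(i, j), hj⟩ else 0) hc (by
      intro l
      ext k
      rw [← sum_E u v A _ hc k l]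
      have := congrFun hg (k, l)
      simp only [Finset.sum_apply, Pi.smul_apply, smul_eq_mul, Pi.zero_apply] at this
      rw [Pi.zero_apply, ← this]
      refine Finset.sum_congr rfl fun e _ => ?_
      have he : e.1.2 ∈ A e.1.1 := e.2
      simp only [he, dif_pos]
      ) e.1.2 e.1.1
    have he : e.1.2 ∈ A e.1.1 := e.2
    simpa only [he, dif_pos] using h1



theorem indep_y {K : Type*} [Field K] {p q s : K} {x y z : Fin 3 → K}
    (G1 : x ⬝ᵥ (y ⨯₃ z) ≠ 0) 
    (hs2 : p • x + (q • y + s • z) = 0) : p = 0 ∧ q = 0 ∧ s = 0 := by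
  have e0 := congrFun hs2 0
  have e1 := congrFun hs2 1
  have e2 := congrFun hs2 2
  simp only [Pi.add_apply, Pi.smul_apply, smul_eq_mul, Pi.zero_apply] at e0 e1 e2
  simp only [cross_apply, dotProduct, Fin.sum_univ_three, cons_val_zero, cons_val_one, cons_val] at G1
  refine ⟨?_, ?_, ?_⟩
  · refine (mul_eq_zero.mp (?_ : p * _ = 0)).resolve_right G1
    linear_combination (y 1 * z 2 - y 2 * z 1) * e0 + (y 2 * z 0 - y 0 * z 2) * e1 +
      (y 0 * z 1 - y 1 * z 0) * e2
  · refine (mul_eq_zero.mp (?_ : q * _ = 0)).resolve_right G1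
    linear_combination (z 1 * x 2 - z 2 * x 1) * e0 + (z 2 * x 0 - z 0 * x 2) * e1 +
      (z 0 * x 1 - z 1 * x 0) * e2
  · refine (mul_eq_zero.mp (?_ : s * _ = 0)).resolve_right G1
    linear_combination (x 1 * y 2 - x 2 * y 1) * e0 + (x 2 * y 0 - x 0 * y 2) * e1 +
      (x 0 * y 1 - x 1 * y 0) * e2

theorem indep_of_gen1 {K : Type*} [Field K] {m : ℕ} (hm : 3 ≤ m) {u : Fin m → Fin 3 → K}
    (G1 : Gen1 u) (B : Finset (Fin m)) (hB : B.card ≤ 3) (c : Fin m → K)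
    (hc : ∀ i, i ∉ B → c i = 0) (hs : ∑ i, c i • u i = 0) : ∀ i, c i = 0 := by
  obtain ⟨B', hBB, hB'⟩ := Finset.exists_superset_card_eq hB (by rw [Fintype.card_fin]; exact hm)
  obtain ⟨x, y, z, hxy, hxz, hyz, hE⟩ := Finset.card_eq_three.mp hB'
  have h0 : ∀ i, i ∉ B' → c i = 0 := fun i hi => hc i fun h => hi (hBB h)
  have hs2 : c x • u x + (c y • u y + c z • u z) = 0 := by
    rw [← hs, ← Finset.sum_subset (Finset.subset_univ B') (fun i _ hi => by rw [h0 i hi, zero_smul]),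
      hE, Finset.sum_insert (by simp [hxy, hxz]),
      Finset.sum_insert (by simp [hyz]), Finset.sum_singleton]
  obtain ⟨hx, hy, hz⟩ := indep_y (G1 x y z hxy hxz hyz) hs2
  intro i
  by_cases hi : i ∈ B'
  · rw [hE, Finset.mem_insert, Finset.mem_insert, Finset.mem_singleton] at hi
    rcases hi with h | h | h <;> rw [h] <;> assumption
  · exact h0 i hi

theorem card_le_three {m n : ℕ} {A : Fin m → Finset (Fin n)}
    (C1 : ∀ i j k l : Fin m, i ≠ j → i ≠ k → i ≠ l → j ≠ k → j ≠ l → k ≠ l →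
          (A i ∩ A j ∩ A k ∩ A l).card = 0) (j : Fin n) :
    (Finset.univ.filter (fun i => j ∈ A i)).card ≤ 3 := by
  by_contra hcon
  push Not at hcon
  obtain ⟨T, hT, hT3⟩ := Finset.exists_subset_card_eq hcon.le
  obtain ⟨w, hw, hwT⟩ := Finset.exists_mem_notMem_of_card_lt_card (hT3.trans_lt hcon)
  obtain ⟨x, y, z, hxy, hxz, hyz, rfl⟩ := Finset.card_eq_three.mp hT3
  have hx := hT (show x ∈ _ by simp)
  have hy := hT (show y ∈ _ by simp)
  have hz := hT (show z ∈ _ by simp)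
  simp only [Finset.mem_filter, Finset.mem_univ, true_and] at hx hy hz hw
  simp only [Finset.mem_insert, Finset.mem_singleton, not_or] at hwT
  have h := Finset.card_eq_zero.mp (C1 x y z w hxy hxz (Ne.symm hwT.1) hyz (Ne.symm hwT.2.1)
    (Ne.symm hwT.2.2))
  have : j ∈ A x ∩ A y ∩ A z ∩ A w := by simp [hx, hy, hz, hw]
  rw [h] at this
  simp at this

theorem mem_Smult {m n : ℕ} {A : Fin m → Finset (Fin n)} {k : ℕ} {j : Fin n} : j ∈ Smult A k ↔
    (Finset.univ.filter (fun i => j ∈ A i)).card = k := by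
  simp [Smult]

theorem Smult_disj {m n : ℕ} {A : Fin m → Finset (Fin n)} {k l : ℕ} (h : k ≠ l) :
    Disjoint (Smult A k) (Smult A l) := by
  rw [Finset.disjoint_left]
  intro j hk hl
  rw [mem_Smult] at hk hl
  exact h (hk.symm.trans hl)

theorem smult_one {m n : ℕ} {A : Fin m → Finset (Fin n)} {j : Fin n} (h : j ∈ Smult A 1) :
    ∃ a, ∀ i, j ∈ A i ↔ i = a := by
  rw [mem_Smult, Finset.card_eq_one] at h
  obtain ⟨a, ha⟩ := h
  exact ⟨a, fun i => by simpa using Finset.ext_iff.mp ha i⟩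

theorem smult_two {m n : ℕ} {A : Fin m → Finset (Fin n)} {j : Fin n} (h : j ∈ Smult A 2) :
    ∃ a b, a ≠ b ∧ ∀ i, j ∈ A i ↔ i = a ∨ i = b := by
  rw [mem_Smult, Finset.card_eq_two] at h
  obtain ⟨a, b, hab, ha⟩ := h
  exact ⟨a, b, hab, fun i => by simpa using Finset.ext_iff.mp ha i⟩

theorem smult_three {m n : ℕ} {A : Fin m → Finset (Fin n)} {j : Fin n} (h : j ∈ Smult A 3) :
    ∃ a b c, a ≠ b ∧ a ≠ c ∧ b ≠ c ∧ ∀ i, j ∈ A i ↔ i = a ∨ i = b ∨ i = c := by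
  rw [mem_Smult, Finset.card_eq_three] at h
  obtain ⟨a, b, c, hab, hac, hbc, ha⟩ := h
  exact ⟨a, b, c, hab, hac, hbc, fun i => by simpa using Finset.ext_iff.mp ha i⟩

theorem suff_v {K : Type*} [Field K] [Infinite K] {m n r : ℕ} (hm : 3 ≤ m)
    {A : Fin m → Finset (Fin n)}
    {u : Fin m → Fin 3 → K} (G1 : Gen1 u) (G2 : Gen2 u)
    (C1 : ∀ i j k l : Fin m, i ≠ j → i ≠ k → i ≠ l → j ≠ k → j ≠ l → k ≠ l →
          (A i ∩ A j ∩ A k ∩ A l).card = 0)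
    (C2 : ∀ i : Fin m, (A i \ Smult A 3).card + (Smult A 3).card ≤ r)
    (C3 : ∀ i j k l : Fin m, i ≠ j → i ≠ k → i ≠ l → j ≠ k → j ≠ l → k ≠ l →
          ((A i ∩ A j) \ Smult A 3).card + ((A k ∩ A l) \ Smult A 3).card +
            (Smult A 3).card ≤ r)
    (C4 : ∀ i j : Fin m, i ≠ j →
          (A i \ Smult A 3).card + (A j \ Smult A 3).card +
            (Smult A 2 \ (Smult A 3 ∪ A i ∪ A j)).card + 2 * (Smult A 3).card ≤ 2 * r)
    (C5 : (Smult A 1).card + 2 * (Smult A 2).card + 3 * (Smult A 3).card ≤ 3 * r) :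
    ∃ v : Fin n → Fin r → K, IndC u v A := by
  have i0 : Fin m := ⟨0, by omega⟩
  have e1 : ∀ j, ∃ a, j ∈ Smult A 1 → ∀ i, j ∈ A i ↔ i = a := by
    intro j
    by_cases h : j ∈ Smult A 1
    · obtain ⟨a, ha⟩ := smult_one h
      exact ⟨a, fun _ => ha⟩
    · exact ⟨i0, fun h' => absurd h' h⟩
  have e2 : ∀ j, ∃ a b, j ∈ Smult A 2 → a ≠ b ∧ ∀ i, j ∈ A i ↔ i = a ∨ i = b := by
    intro j
    by_cases h : j ∈ Smult A 2
    · obtain ⟨a, b, ha⟩ := smult_two h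
      exact ⟨a, b, fun _ => ha⟩
    · exact ⟨i0, i0, fun h' => absurd h' h⟩
  choose a1 h1 using e1
  choose a2 b2 h2 using e2
  have hs3 : (Smult A 3).card ≤ r := by have := C2 i0; omega
  have d12 : Disjoint (Smult A 1) (Smult A 2) := Smult_disj (by norm_num)
  have d13 : Disjoint (Smult A 1) (Smult A 3) := Smult_disj (by norm_num)
  have d23 : Disjoint (Smult A 2) (Smult A 3) := Smult_disj (by norm_num)
  have main : ∃ v : Fin n → Fin r → K, ∀ x : Fin n → Fin 3 → K,
      (∀ j ∈ Smult A 1, ∃ c : K, x j = c • u (a1 j)) →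
      (∀ j ∈ Smult A 2, x j ⬝ᵥ (u (a2 j) ⨯₃ u (b2 j)) = 0) →
      (∀ j, j ∉ Smult A 1 → j ∉ Smult A 2 → j ∉ Smult A 3 → x j = 0) →
      (∀ l, ∑ j, v j l • x j = 0) → ∀ j, x j = 0 := by
    rcases le_total ((Smult A 2).card + (Smult A 3).card) r with hq | hq
    · exact core1 hm G1 d12 d13 d23 h1 (fun j hj => (h2 j hj).1) (fun j hj => (h2 j hj).2)
        C2 C4 C5 hq
    · exact core2 hm G1 G2 d12 d13 d23 h1 (fun j hj => (h2 j hj).1) (fun j hj => (h2 j hj).2)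
        C2 C3 C4 C5 hq hs3
  obtain ⟨v, hv⟩ := main
  refine ⟨v, fun c hc hs j => ?_⟩
  have hx := hv (fun j => ∑ i, c j i • u i) ?_ ?_ ?_ hs j
  · exact indep_of_gen1 hm G1 (Finset.univ.filter (fun i => j ∈ A i)) (card_le_three C1 j) (c j)
      (fun i hi => hc j i (by simpa using hi)) hx
  · intro j hj
    refine ⟨c j (a1 j), ?_⟩
    refine Finset.sum_eq_single_of_mem (a1 j) (Finset.mem_univ _) fun i _ hi => ?_
    rw [hc j i (fun h => hi ((h1 j hj i).mp h)), zero_smul]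
  · intro j hj
    obtain ⟨-, h⟩ := h2 j hj
    rw [sum_dotProduct]
    refine Finset.sum_eq_zero fun i _ => ?_
    by_cases hi : j ∈ A i
    · rcases (h i).mp hi with rfl | rfl <;> simp
    · rw [hc j i hi, zero_smul, zero_dotProduct]
  · intro j n1 n2 n3
    rw [mem_Smult] at n1 n2 n3
    have h3 := card_le_three C1 j
    have h0 : (Finset.univ.filter (fun i => j ∈ A i)).card = 0 := by omega
    rw [Finset.card_eq_zero] at h0
    refine Finset.sum_eq_zero fun i _ => ?_
    rw [hc j i (fun h => by
      have : i ∈ Finset.univ.filter (fun i => j ∈ A i) := by simpa using h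
      rw [h0] at this; simp at this), zero_smul]

def gV (F : Type*) [Field F] (m n r : ℕ) (j : Fin n) (l : Fin r) :
    FractionRing (MvPolynomial ((Fin m × Fin 3) ⊕ (Fin n × Fin r)) F) :=
  algebraMap (MvPolynomial ((Fin m × Fin 3) ⊕ (Fin n × Fin r)) F) _
    (MvPolynomial.X (Sum.inr (j, l)))

theorem tensorIndep_iff (F : Type*) [Field F] (m n r : ℕ) (A : Fin m → Finset (Fin n)) :
    TensorIndep F m n 3 r {p : Fin m × Fin n | p.2 ∈ A p.1} ↔
      IndC (gU F m n r) (gV F m n r) A := by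
  rw [← indC_iff]
  rfl

theorem generic_of_special (F : Type*) [Field F] (m n r : ℕ) (A : Fin m → Finset (Fin n))
    (v : Fin n → Fin r → FractionRing (MvPolynomial ((Fin m × Fin 3) ⊕ (Fin n × Fin r)) F))
    (h : IndC (gU F m n r) v A) : IndC (gU F m n r) (gV F m n r) A := by
  rw [← indC_iff] at h ⊢
  have key := specialize_indep (K := FractionRing (MvPolynomial ((Fin m × Fin 3) ⊕ (Fin n × Fin r)) F))
    (MvPolynomial.eval₂Hom ((algebraMap (MvPolynomial ((Fin m × Fin 3) ⊕ (Fin n × Fin r)) F)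
      (FractionRing (MvPolynomial ((Fin m × Fin 3) ⊕ (Fin n × Fin r)) F))).comp MvPolynomial.C)
      (Sum.elim (fun p => gU F m n r p.1 p.2) (fun q => v q.1 q.2)))
    (fun (e : {p : Fin m × Fin n | p.2 ∈ A p.1}) (kl : Fin 3 × Fin r) =>
      MvPolynomial.X (Sum.inl (e.1.1, kl.1)) * MvPolynomial.X (Sum.inr (e.1.2, kl.2))) (by
      simpa only [map_mul, MvPolynomial.coe_eval₂Hom, MvPolynomial.eval₂_X, Sum.elim_inl,
        Sum.elim_inr] using h)
  simp only [map_mul] at key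
  exact key

theorem infinite_K (F : Type*) [Field F] (m n r : ℕ) (hm : 3 ≤ m) :
    Infinite (FractionRing (MvPolynomial ((Fin m × Fin 3) ⊕ (Fin n × Fin r)) F)) := by
  have : Nonempty ((Fin m × Fin 3) ⊕ (Fin n × Fin r)) := ⟨Sum.inl (⟨0, by omega⟩, 0)⟩
  exact Infinite.of_injective _ (IsFractionRing.injective
    (MvPolynomial ((Fin m × Fin 3) ⊕ (Fin n × Fin r)) F) _)


/-- the local space at a column -/
def Wsub {K : Type*} [Field K] {m n : ℕ} (u : Fin m → Fin 3 → K) (A : Fin m → Finset (Fin n))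
    (j : Fin n) : Submodule K (Fin 3 → K) where
  carrier := {x | ∃ c : Fin m → K, (∀ i, j ∉ A i → c i = 0) ∧ x = ∑ i, c i • u i}
  zero_mem' := ⟨0, by simp, by simp⟩
  add_mem' := by
    rintro _ _ ⟨c, hc, rfl⟩ ⟨d, hd, rfl⟩
    refine ⟨c + d, fun i hi => by simp [hc i hi, hd i hi], ?_⟩
    simp [add_smul, Finset.sum_add_distrib]
  smul_mem' := by
    rintro t _ ⟨c, hc, rfl⟩
    refine ⟨t • c, fun i hi => by simp [hc i hi], ?_⟩
    simp [Finset.smul_sum, mul_smul]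

theorem mem_Wsub {K : Type*} [Field K] {m n : ℕ} (u : Fin m → Fin 3 → K)
    {A : Fin m → Finset (Fin n)} {j : Fin n} {i : Fin m} (h : j ∈ A i) : u i ∈ Wsub u A j := by
  refine ⟨Pi.single i 1, fun i' hi' => ?_, ?_⟩
  · rw [Pi.single_eq_of_ne]
    rintro rfl
    exact hi' h
  · rw [Finset.sum_eq_single_of_mem i (Finset.mem_univ _)]
    · simp
    · intro b _ hb
      rw [Pi.single_eq_of_ne hb, zero_smul]

theorem rank_bound {K : Type*} [Field K] {m n r : ℕ} {u : Fin m → Fin 3 → K}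
    {v : Fin n → Fin r → K} {A : Fin m → Finset (Fin n)} (h : IndC u v A)
    (U : Submodule K (Fin 3 → K)) :
    ∑ j, Module.finrank K ↥(Wsub u A j ⊓ U) ≤ r * Module.finrank K U := by
  let T : (∀ j, ↥(Wsub u A j ⊓ U)) →ₗ[K] (Fin r → U) :=
    LinearMap.pi fun l => ∑ j, v j l •
      ((Submodule.inclusion (inf_le_right : Wsub u A j ⊓ U ≤ U)) ∘ₗ LinearMap.proj j)
  have hT : Function.Injective T := by
    rw [injective_iff_map_eq_zero]
    intro x hx
    have hxm : ∀ j, ∃ c : Fin m → K, (∀ i, j ∉ A i → c i = 0) ∧ (x j : Fin 3 → K) = ∑ i, c i • u i :=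
      fun j => (x j).2.1
    choose c hc hxc using hxm
    have h0 : ∀ j i, c j i = 0 := by
      apply h c hc
      intro l
      have := congrArg (Subtype.val) (congrFun hx l)
      simp only [T, LinearMap.pi_apply, LinearMap.sum_apply, LinearMap.smul_apply,
        LinearMap.comp_apply, LinearMap.proj_apply, Submodule.coe_sum, Submodule.coe_smul,
        Submodule.coe_inclusion, Pi.zero_apply, Submodule.coe_zero] at this
      rw [← this]
      exact Finset.sum_congr rfl fun j _ => by rw [hxc j]
    funext j
    apply Subtype.ext
    rw [hxc j]
    simp [h0]
  have := LinearMap.finrank_le_finrank_of_injective hT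
  rwa [Module.finrank_pi_fintype, Module.finrank_pi_fintype, Finset.sum_const, Finset.card_univ,
    Fintype.card_fin, smul_eq_mul] at this

theorem nec1 {K : Type*} [Field K] {m n r : ℕ} {u : Fin m → Fin 3 → K}
    {v : Fin n → Fin r → K} {A : Fin m → Finset (Fin n)} (h : IndC u v A) :
    ∀ i j k l : Fin m, i ≠ j → i ≠ k → i ≠ l → j ≠ k → j ≠ l → k ≠ l →
          (A i ∩ A j ∩ A k ∩ A l).card = 0 := by
  intro i j k l hij hik hil hjk hjl hkl
  rw [Finset.card_eq_zero, Finset.eq_empty_iff_forall_notMem]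
  intro t ht
  simp only [Finset.mem_inter] at ht
  have hli : LinearIndependent K (fun a : {a // t ∈ A a} => u a.1) := by
    rw [Fintype.linearIndependent_iff]
    intro g hg a
    have := h (fun j' b => if hb : t ∈ A b then (if j' = t then g ⟨b, hb⟩ else 0) else 0) ?_ ?_ t a.1
    · simpa [a.2] using this
    · intro j' b hb
      by_cases e : j' = t
      · subst e; simp [hb]
      · simp [e]
    · intro l
      refine Finset.sum_eq_zero fun j' _ => ?_
      by_cases e : j' = t
      · subst e
        rw [← Finset.sum_filter_of_ne (p := fun b => j' ∈ A b)]
        · rw [Finset.sum_subtype (p := fun b => j' ∈ A b) _ (by simp)]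
          have : (∑ a : {a // j' ∈ A a}, (if hb : j' ∈ A a.1 then (if j' = j' then g ⟨a.1, hb⟩ else 0)
              else 0) • u a.1) = ∑ a, g a • u a.1 := by
            refine Finset.sum_congr rfl fun a _ => ?_
            simp [a.2]
          rw [this, hg, smul_zero]
        · intro b _ hb
          by_contra hn
          simp [hn] at hb
      · simp [e]
  have hcard := hli.fintype_card_le_finrank
  rw [Module.finrank_fin_fun, Fintype.card_subtype] at hcard
  have hs : ({i, j, k, l} : Finset (Fin m)) ⊆ Finset.univ.filter (fun a => t ∈ A a) := by
    intro b hb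
    simp only [Finset.mem_insert, Finset.mem_singleton] at hb
    rcases hb with rfl | rfl | rfl | rfl <;> simp [ht]
  have h4 : ({i, j, k, l} : Finset (Fin m)).card = 4 := by
    rw [Finset.card_insert_of_notMem (by simp [hij, hik, hil]),
      Finset.card_insert_of_notMem (by simp [hjk, hjl]), Finset.card_pair hkl]
  have := Finset.card_le_card hs
  omega

theorem sub1 {K : Type*} [Field K] {M : Submodule K (Fin 3 → K)} {y : Fin 3 → K} (hy : y ∈ M)
    (h0 : y ≠ 0) : 1 ≤ Module.finrank K M := by
  have := one_le_dim (s := (M : Set (Fin 3 → K))) hy h0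
  rwa [Submodule.span_eq] at this

theorem sub2 {K : Type*} [Field K] {M : Submodule K (Fin 3 → K)} {y z : Fin 3 → K} (hy : y ∈ M)
    (hz : z ∈ M) (h0 : y ⨯₃ z ≠ 0) : 2 ≤ Module.finrank K M := by
  have := two_le_dim (s := (M : Set (Fin 3 → K))) hy hz h0
  rwa [Submodule.span_eq] at this

theorem sub3 {K : Type*} [Field K] {M : Submodule K (Fin 3 → K)} {y z w : Fin 3 → K} (hy : y ∈ M)
    (hz : z ∈ M) (hw : w ∈ M) (h0 : y ⬝ᵥ (z ⨯₃ w) ≠ 0) : 3 ≤ Module.finrank K M := by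
  have := three_le_dim (s := (M : Set (Fin 3 → K))) hy hz hw h0
  rwa [Submodule.span_eq] at this

theorem Wsub_top {K : Type*} [Field K] {m n : ℕ} {u : Fin m → Fin 3 → K} (G1 : Gen1 u)
    {A : Fin m → Finset (Fin n)} {j : Fin n} (hj : j ∈ Smult A 3) : Wsub u A j = ⊤ := by
  obtain ⟨a, b, c, hab, hac, hbc, h⟩ := smult_three hj
  apply Submodule.eq_top_of_finrank_eq
  refine le_antisymm (Submodule.finrank_le _) ?_
  rw [Module.finrank_fin_fun]
  exact sub3 (mem_Wsub u ((h a).mpr (by simp))) (mem_Wsub u ((h b).mpr (by simp)))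
    (mem_Wsub u ((h c).mpr (by simp))) (G1 a b c hab hac hbc)

theorem card_ite {n : ℕ} (s : Finset (Fin n)) : s.card = ∑ j, if j ∈ s then 1 else 0 := by
  simp

theorem cc_id {K : Type*} [Field K] (a b c d : Fin 3 → K) :
    (a ⨯₃ b) ⨯₃ (c ⨯₃ d) = (a ⬝ᵥ (c ⨯₃ d)) • b - (b ⬝ᵥ (c ⨯₃ d)) • a := by
  ext i; fin_cases i <;> simp [cross_apply, dotProduct, Fin.sum_univ_three] <;> ring

theorem cc_mem1 {K : Type*} [Field K] {M : Submodule K (Fin 3 → K)} {a b c d : Fin 3 → K}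
    (ha : a ∈ M) (hb : b ∈ M) : (a ⨯₃ b) ⨯₃ (c ⨯₃ d) ∈ M := by
  rw [cc_id]
  exact M.sub_mem (M.smul_mem _ hb) (M.smul_mem _ ha)

theorem cc_mem2 {K : Type*} [Field K] {M : Submodule K (Fin 3 → K)} {a b c d : Fin 3 → K}
    (hc : c ∈ M) (hd : d ∈ M) : (a ⨯₃ b) ⨯₃ (c ⨯₃ d) ∈ M := by
  rw [← cross_anticomm]
  exact M.neg_mem (cc_mem1 hc hd)

theorem nec2 {K : Type*} [Field K] {m n r : ℕ} (hm : 3 ≤ m) {u : Fin m → Fin 3 → K} (G1 : Gen1 u)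
    {v : Fin n → Fin r → K} {A : Fin m → Finset (Fin n)} (h : IndC u v A) (i : Fin m) :
    (A i \ Smult A 3).card + (Smult A 3).card ≤ r := by
  have hb := rank_bound h (Submodule.span K {u i})
  rw [finrank_span_singleton (G1.ne_zero hm i), mul_one] at hb
  refine le_trans ?_ hb
  rw [card_ite, card_ite, ← Finset.sum_add_distrib]
  refine Finset.sum_le_sum fun j _ => ?_
  have hU : u i ∈ Submodule.span K {u i} := Submodule.mem_span_singleton_self _
  by_cases h3 : j ∈ Smult A 3
  · have := sub1 (M := Wsub u A j ⊓ Submodule.span K {u i})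
      ⟨by rw [Wsub_top G1 h3]; trivial, hU⟩ (G1.ne_zero hm i)
    simpa [h3] using this
  · by_cases hi : j ∈ A i
    · have := sub1 (M := Wsub u A j ⊓ Submodule.span K {u i})
        ⟨mem_Wsub u hi, hU⟩ (G1.ne_zero hm i)
      simpa [h3, hi] using this
    · simp [h3, hi]

theorem nec3 {K : Type*} [Field K] {m n r : ℕ} (hm : 3 ≤ m) {u : Fin m → Fin 3 → K} (G1 : Gen1 u)
    {v : Fin n → Fin r → K} {A : Fin m → Finset (Fin n)} (h : IndC u v A)
    (i j k l : Fin m) (hij : i ≠ j) (hik : i ≠ k) (hil : i ≠ l) (hjk : j ≠ k) (hjl : j ≠ l)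
    (hkl : k ≠ l) : ((A i ∩ A j) \ Smult A 3).card + ((A k ∩ A l) \ Smult A 3).card +
            (Smult A 3).card ≤ r := by
  have hP : (u i ⨯₃ u j) ⨯₃ (u k ⨯₃ u l) ≠ 0 :=
    G1.cross_cross hm hij hkl (fun e => hik e.1) (fun e => hil e.1)
  have h1 := nec1 h i j k l hij hik hil hjk hjl hkl
  rw [Finset.card_eq_zero, Finset.eq_empty_iff_forall_notMem] at h1
  have m1 : ∀ t, t ∈ A i → t ∈ A j → (u i ⨯₃ u j) ⨯₃ (u k ⨯₃ u l) ∈ Wsub u A t :=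
    fun t ti tj => cc_mem1 (mem_Wsub u ti) (mem_Wsub u tj)
  have m2 : ∀ t, t ∈ A k → t ∈ A l → (u i ⨯₃ u j) ⨯₃ (u k ⨯₃ u l) ∈ Wsub u A t :=
    fun t tk tl => cc_mem2 (mem_Wsub u tk) (mem_Wsub u tl)
  generalize (u i ⨯₃ u j) ⨯₃ (u k ⨯₃ u l) = P at hP m1 m2
  have hb := rank_bound h (Submodule.span K {P})
  rw [finrank_span_singleton hP, mul_one] at hb
  refine le_trans ?_ hb
  rw [card_ite, card_ite, card_ite (Smult A 3), ← Finset.sum_add_distrib, ← Finset.sum_add_distrib]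
  refine Finset.sum_le_sum fun t _ => ?_
  have hU : P ∈ Submodule.span K {P} := Submodule.mem_span_singleton_self _
  have ht := h1 t
  simp only [Finset.mem_inter] at ht
  by_cases h3 : t ∈ Smult A 3
  · have := sub1 (M := Wsub u A t ⊓ Submodule.span K {P})
      ⟨by rw [Wsub_top G1 h3]; trivial, hU⟩ hP
    simpa [h3] using this
  by_cases c1 : t ∈ A i ∧ t ∈ A j
  · have := sub1 (M := Wsub u A t ⊓ Submodule.span K {P}) ⟨m1 t c1.1 c1.2, hU⟩ hP
    have c2 : ¬ (t ∈ A k ∧ t ∈ A l) := by tauto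
    simpa [h3, c1, c2] using this
  by_cases c2 : t ∈ A k ∧ t ∈ A l
  · have := sub1 (M := Wsub u A t ⊓ Submodule.span K {P}) ⟨m2 t c2.1 c2.2, hU⟩ hP
    simpa [h3, c1, c2] using this
  · simp [h3, c1, c2]

theorem nec4 {K : Type*} [Field K] {m n r : ℕ} (hm : 3 ≤ m) {u : Fin m → Fin 3 → K} (G1 : Gen1 u)
    {v : Fin n → Fin r → K} {A : Fin m → Finset (Fin n)} (h : IndC u v A)
    (i j : Fin m) (hij : i ≠ j) : (A i \ Smult A 3).card + (A j \ Smult A 3).card +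
            (Smult A 2 \ (Smult A 3 ∪ A i ∪ A j)).card + 2 * (Smult A 3).card ≤ 2 * r := by
  have hi : u i ∈ Submodule.span K (({u i, u j} : Finset (Fin 3 → K)) : Set (Fin 3 → K)) :=
    Submodule.subset_span (by simp)
  have hj : u j ∈ Submodule.span K (({u i, u j} : Finset (Fin 3 → K)) : Set (Fin 3 → K)) :=
    Submodule.subset_span (by simp)
  have hle : Module.finrank K (Submodule.span K
      (({u i, u j} : Finset (Fin 3 → K)) : Set (Fin 3 → K))) ≤ 2 :=
    (finrank_span_finset_le_card _).trans Finset.card_le_two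
  generalize Submodule.span K (({u i, u j} : Finset (Fin 3 → K)) : Set (Fin 3 → K)) = U at hi hj hle
  have hb := (rank_bound h U).trans (Nat.mul_le_mul_left r hle)
  rw [mul_comm 2 r]
  refine le_trans ?_ hb
  rw [card_ite, card_ite, card_ite (_ \ (_ ∪ _)), card_ite (Smult A 3), Finset.mul_sum,
    ← Finset.sum_add_distrib, ← Finset.sum_add_distrib, ← Finset.sum_add_distrib]
  refine Finset.sum_le_sum fun t _ => ?_
  have hx := G1.cross hm hij
  by_cases h3 : t ∈ Smult A 3
  · have : 2 ≤ Module.finrank K ↥(Wsub u A t ⊓ U) := by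
      rw [Wsub_top G1 h3, top_inf_eq]
      exact sub2 hi hj hx
    simpa [h3] using this
  by_cases c1 : t ∈ A i <;> by_cases c2 : t ∈ A j
  · have := sub2 (M := Wsub u A t ⊓ U) ⟨mem_Wsub u c1, hi⟩ ⟨mem_Wsub u c2, hj⟩ hx
    simpa [h3, c1, c2] using this
  · have := sub1 (M := Wsub u A t ⊓ U) ⟨mem_Wsub u c1, hi⟩ (G1.ne_zero hm i)
    simpa [h3, c1, c2] using this
  · have := sub1 (M := Wsub u A t ⊓ U) ⟨mem_Wsub u c2, hj⟩ (G1.ne_zero hm j)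
    simpa [h3, c1, c2] using this
  by_cases c3 : t ∈ Smult A 2
  · obtain ⟨k, l, hkl, hB⟩ := smult_two c3
    have tk := (hB k).mpr (Or.inl rfl)
    have tl := (hB l).mpr (Or.inr rfl)
    have := sub1 (M := Wsub u A t ⊓ U)
      ⟨cc_mem2 (mem_Wsub u tk) (mem_Wsub u tl), cc_mem1 hi hj⟩
      (G1.cross_cross hm hij hkl (fun e => c1 (e.1 ▸ tk)) (fun e => c1 (e.1 ▸ tl)))
    simpa [h3, c1, c2, c3] using this
  · simp [h3, c1, c2, c3]

theorem nec5 {K : Type*} [Field K] {m n r : ℕ} (hm : 3 ≤ m) {u : Fin m → Fin 3 → K} (G1 : Gen1 u)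
    {v : Fin n → Fin r → K} {A : Fin m → Finset (Fin n)} (h : IndC u v A) :
    (Smult A 1).card + 2 * (Smult A 2).card + 3 * (Smult A 3).card ≤ 3 * r := by
  have hb := rank_bound h ⊤
  rw [finrank_top, Module.finrank_fin_fun, mul_comm r 3] at hb
  refine le_trans ?_ hb
  rw [card_ite, card_ite (Smult A 2), card_ite (Smult A 3), Finset.mul_sum, Finset.mul_sum,
    ← Finset.sum_add_distrib, ← Finset.sum_add_distrib]
  refine Finset.sum_le_sum fun t _ => ?_
  rw [inf_top_eq]
  by_cases h1 : t ∈ Smult A 1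
  · have h2 := Finset.disjoint_left.mp (Smult_disj (A := A) (show 1 ≠ 2 by norm_num)) h1
    have h3 := Finset.disjoint_left.mp (Smult_disj (A := A) (show 1 ≠ 3 by norm_num)) h1
    obtain ⟨a, ha⟩ := smult_one h1
    have := sub1 (mem_Wsub u ((ha a).mpr rfl)) (G1.ne_zero hm a)
    simpa [h1, h2, h3] using this
  by_cases h2 : t ∈ Smult A 2
  · have h3 := Finset.disjoint_left.mp (Smult_disj (A := A) (show 2 ≠ 3 by norm_num)) h2
    obtain ⟨a, b, hab, hB⟩ := smult_two h2
    have := sub2 (mem_Wsub u ((hB a).mpr (Or.inl rfl))) (mem_Wsub u ((hB b).mpr (Or.inr rfl)))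
      (G1.cross hm hab)
    simpa [h1, h2, h3] using this
  by_cases h3 : t ∈ Smult A 3
  · rw [Wsub_top G1 h3, finrank_top, Module.finrank_fin_fun]
    simp [h1, h2, h3]
  · simp [h1, h2, h3]

end TensorHelpers

theorem case_s_eq_three (F : Type*) [Field F] (m n r : ℕ) (hm : 3 ≤ m) (hr : r ≤ n)
    (A : Fin m → Finset (Fin n)) (hA : ∀ i, (A i).card ≤ r) :
    TensorIndep F m n 3 r {p : Fin m × Fin n | p.2 ∈ A p.1} ↔
      ((∀ i j k l : Fin m, i ≠ j → i ≠ k → i ≠ l → j ≠ k → j ≠ l → k ≠ l →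
          (A i ∩ A j ∩ A k ∩ A l).card = 0) ∧
       (∀ i : Fin m, (A i \ Smult A 3).card + (Smult A 3).card ≤ r) ∧
       (∀ i j k l : Fin m, i ≠ j → i ≠ k → i ≠ l → j ≠ k → j ≠ l → k ≠ l →
          ((A i ∩ A j) \ Smult A 3).card + ((A k ∩ A l) \ Smult A 3).card +
            (Smult A 3).card ≤ r) ∧
       (∀ i j : Fin m, i ≠ j →
          (A i \ Smult A 3).card + (A j \ Smult A 3).card +
            (Smult A 2 \ (Smult A 3 ∪ A i ∪ A j)).card + 2 * (Smult A 3).card ≤ 2 * r) ∧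
       (Smult A 1).card + 2 * (Smult A 2).card + 3 * (Smult A 3).card ≤ 3 * r) := by
  constructor
  · intro h
    rw [tensorIndep_iff] at h
    have G1 := gen1_gU F m n r
    exact ⟨nec1 h, nec2 hm G1 h, nec3 hm G1 h, nec4 hm G1 h, nec5 hm G1 h⟩
  · rintro ⟨C1, C2, C3, C4, C5⟩
    rw [tensorIndep_iff]
    have := infinite_K F m n r hm
    obtain ⟨v, hv⟩ := suff_v hm (gen1_gU F m n r) (gen2_gU F m n r) C1 C2 C3 C4 C5
    exact generic_of_special F m n r A v hv
end
end

section
/- Let 0 ≤ a ≤ m and 0 ≤ b ≤ n. Let C_1 and C_2 be distinct minimal Laman violators in [m]×[n] whose minimal rectangles are S_1×T_1 and S_2×T_2, respectively. If |S_1 ∩ S_2| ≥ a, then for every element e ∈ C_1 ∪ C_2, the set (C_1 ∪ C_2) ∖ {e} violates the (a,b)-Laman condition. -/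
open scoped Classical

noncomputable section

/-- `U` violates the `(a,b)`-Laman condition: there are `S ⊆ [m]`, `T ⊆ [n]` with
`|S| ≥ a`, `|T| ≥ b` and `|U ∩ (S×T)| > |S|·b + |T|·a − a·b` (stated additively to
avoid truncated subtraction). -/
def ViolatesLaman (m n a b : ℕ) (U : Finset (Fin m × Fin n)) : Prop :=
  ∃ S : Finset (Fin m), ∃ T : Finset (Fin n), a ≤ S.card ∧ b ≤ T.card ∧
    S.card * b + T.card * a < (U ∩ S ×ˢ T).card + a * b

/-- `U` is a minimal set violating the `(a,b)`-Laman condition. -/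
def MinimalLamanViolator (m n a b : ℕ) (U : Finset (Fin m × Fin n)) : Prop :=
  ViolatesLaman m n a b U ∧ ∀ V : Finset (Fin m × Fin n), V ⊂ U → ¬ ViolatesLaman m n a b V

lemma laman_min_aux (m n a b : ℕ) (C : Finset (Fin m × Fin n))
    (h : MinimalLamanViolator m n a b C) :
    a ≤ (C.image Prod.fst).card ∧ b ≤ (C.image Prod.snd).card ∧
    (C.image Prod.fst).card * b + (C.image Prod.snd).card * a < C.card + a * b := by
  obtain ⟨⟨S, T, hS, hT, hlt⟩, hmin⟩ := h
  have hsub : C ∩ S ×ˢ T = C := by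
    by_contra hne
    refine hmin (C ∩ S ×ˢ T)
      (Finset.ssubset_iff_subset_ne.mpr ⟨Finset.inter_subset_left, hne⟩) ⟨S, T, hS, hT, ?_⟩
    rwa [Finset.inter_assoc, Finset.inter_self]
  rw [hsub] at hlt
  have hCST : C ⊆ S ×ˢ T := Finset.inter_eq_left.mp hsub
  have h1 : C.image Prod.fst ⊆ S := by
    intro x hx
    obtain ⟨p, hp, rfl⟩ := Finset.mem_image.mp hx
    exact (Finset.mem_product.mp (hCST hp)).1
  have h2 : C.image Prod.snd ⊆ T := by
    intro x hx
    obtain ⟨p, hp, rfl⟩ := Finset.mem_image.mp hx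
    exact (Finset.mem_product.mp (hCST hp)).2
  have h3 : C ⊆ C.image Prod.fst ×ˢ C.image Prod.snd := fun p hp =>
    Finset.mem_product.mpr ⟨Finset.mem_image_of_mem _ hp, Finset.mem_image_of_mem _ hp⟩
  have c1 := Finset.card_le_card h1
  have c2 := Finset.card_le_card h2
  have c3 := Finset.card_le_card h3
  rw [Finset.card_product] at c3
  generalize (C.image Prod.fst).card = s at *
  generalize (C.image Prod.snd).card = t at *
  refine ⟨?_, ?_, ?_⟩
  · by_contra hc
    push Not at hc
    have e1 : s * t ≤ a * T.card := Nat.mul_le_mul hc.le c2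
    have e2 : a * b ≤ S.card * b := Nat.mul_le_mul_right _ hS
    nlinarith
  · by_contra hc
    push Not at hc
    have e1 : s * t ≤ S.card * b := Nat.mul_le_mul c1 hc.le
    have e2 : b * a ≤ T.card * a := Nat.mul_le_mul_right _ hT
    nlinarith
  · have e1 : s * b ≤ S.card * b := Nat.mul_le_mul_right _ c1
    have e2 : t * a ≤ T.card * a := Nat.mul_le_mul_right _ c2
    omega

theorem laman_circuit_elimination (m n a b : ℕ) (ha : a ≤ m) (hb : b ≤ n)
    (C₁ C₂ : Finset (Fin m × Fin n)) (hne : C₁ ≠ C₂)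
    (h₁ : MinimalLamanViolator m n a b C₁) (h₂ : MinimalLamanViolator m n a b C₂)
    (hS : a ≤ (C₁.image Prod.fst ∩ C₂.image Prod.fst).card) :
    ∀ e ∈ C₁ ∪ C₂, ViolatesLaman m n a b ((C₁ ∪ C₂).erase e) := by
  intro e he
  obtain ⟨a1, b1, l1⟩ := laman_min_aux m n a b C₁ h₁
  obtain ⟨a2, b2, l2⟩ := laman_min_aux m n a b C₂ h₂
  have hss : C₁ ∩ C₂ ⊂ C₁ := by
    refine Finset.ssubset_iff_subset_ne.mpr ⟨Finset.inter_subset_left, fun h => ?_⟩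
    have h12 : C₁ ⊆ C₂ := Finset.inter_eq_left.mp h
    exact h₂.2 C₁ (Finset.ssubset_iff_subset_ne.mpr ⟨h12, hne⟩) h₁.1
  have hnv := h₁.2 _ hss
  have mem1 : ∀ p ∈ C₁, p.1 ∈ C₁.image Prod.fst ∧ p.2 ∈ C₁.image Prod.snd := fun p hp =>
    ⟨Finset.mem_image_of_mem _ hp, Finset.mem_image_of_mem _ hp⟩
  have mem2 : ∀ p ∈ C₂, p.1 ∈ C₂.image Prod.fst ∧ p.2 ∈ C₂.image Prod.snd := fun p hp =>
    ⟨Finset.mem_image_of_mem _ hp, Finset.mem_image_of_mem _ hp⟩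
  generalize C₁.image Prod.fst = S₁ at *
  generalize C₁.image Prod.snd = T₁ at *
  generalize C₂.image Prod.fst = S₂ at *
  generalize C₂.image Prod.snd = T₂ at *
  have hsub : C₁ ∩ C₂ ⊆ (S₁ ∩ S₂) ×ˢ (T₁ ∩ T₂) := by
    intro p hp
    have q1 := mem1 p (Finset.mem_inter.mp hp).1
    have q2 := mem2 p (Finset.mem_inter.mp hp).2
    simp only [Finset.mem_product, Finset.mem_inter]
    exact ⟨⟨q1.1, q2.1⟩, ⟨q1.2, q2.2⟩⟩
  have key : (C₁ ∩ C₂).card + a * b ≤ (S₁ ∩ S₂).card * b + (T₁ ∩ T₂).card * a := by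
    by_cases hT : b ≤ (T₁ ∩ T₂).card
    · by_contra hc
      push Not at hc
      refine hnv ⟨S₁ ∩ S₂, T₁ ∩ T₂, hS, hT, ?_⟩
      rwa [Finset.inter_eq_left.mpr hsub]
    · push Not at hT
      have c := Finset.card_le_card hsub
      rw [Finset.card_product] at c
      obtain ⟨x, hx⟩ := Nat.exists_eq_add_of_le hS
      obtain ⟨y, hy⟩ := Nat.exists_eq_add_of_le hT.le
      rw [hx] at c ⊢
      generalize (T₁ ∩ T₂).card = t at *
      subst hy
      nlinarith [Nat.zero_le (x * y)]
  have hU : (C₁ ∪ C₂).erase e ∩ (S₁ ∪ S₂) ×ˢ (T₁ ∪ T₂) = (C₁ ∪ C₂).erase e := by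
    refine Finset.inter_eq_left.mpr fun p hp => ?_
    simp only [Finset.mem_product, Finset.mem_union]
    rcases Finset.mem_union.mp (Finset.mem_of_mem_erase hp) with h | h
    · exact ⟨Or.inl (mem1 p h).1, Or.inl (mem1 p h).2⟩
    · exact ⟨Or.inr (mem2 p h).1, Or.inr (mem2 p h).2⟩
  refine ⟨S₁ ∪ S₂, T₁ ∪ T₂, a1.trans (Finset.card_le_card Finset.subset_union_left),
    b1.trans (Finset.card_le_card Finset.subset_union_left), ?_⟩
  rw [hU]
  have k0 := Finset.card_erase_add_one he
  have k1 := Finset.card_union_add_card_inter C₁ C₂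
  have k2 := congrArg (· * b) (Finset.card_union_add_card_inter S₁ S₂)
  have k3 := congrArg (· * a) (Finset.card_union_add_card_inter T₁ T₂)
  simp only [add_mul] at k2 k3
  omega
end
end

section
/- Let 0 ≤ a ≤ m and 0 ≤ b ≤ n with m − a ≤ 2. If C_1 and C_2 are distinct minimal Laman violators in [m]×[n], then for every element e ∈ C_1 ∪ C_2, the set (C_1 ∪ C_2) ∖ {e} violates the (a,b)-Laman condition. (Consequently the minimal Laman violators satisfy the circuit-elimination axiom and are the circuits of a matroid on [m]×[n].) -/
open scoped Classical

noncomputable section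

theorem minimal_struct {m n a b : ℕ} {C : Finset (Fin m × Fin n)}
    (h : MinimalLamanViolator m n a b C) :
    ∃ S : Finset (Fin m), ∃ T : Finset (Fin n), a + 1 ≤ S.card ∧ b ≤ T.card ∧ C ⊆ S ×ˢ T ∧
      S.card * b + T.card * a < C.card + a * b := by
  obtain ⟨⟨S, T, hS, hT, hlt⟩, hmin⟩ := h
  have hsub : C ∩ S ×ˢ T = C := by
    by_contra hne
    refine hmin (C ∩ S ×ˢ T) (lt_of_le_of_ne Finset.inter_subset_left hne) ⟨S, T, hS, hT, ?_⟩
    rwa [Finset.inter_assoc, Finset.inter_self]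
  rw [hsub] at hlt
  have hsub' : C ⊆ S ×ˢ T := Finset.inter_eq_left.mp hsub
  refine ⟨S, T, ?_, hT, hsub', hlt⟩
  by_contra hc
  have hSa : S.card = a := by omega
  have := Finset.card_le_card hsub'
  rw [Finset.card_product, hSa] at this
  rw [hSa] at hlt
  nlinarith

theorem laman_circuit_axiom (m n a b : ℕ) (ha : a ≤ m) (hb : b ≤ n) (hma : m ≤ a + 2)
    (C₁ C₂ : Finset (Fin m × Fin n)) (hne : C₁ ≠ C₂)
    (h₁ : MinimalLamanViolator m n a b C₁) (h₂ : MinimalLamanViolator m n a b C₂) :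
    ∀ e ∈ C₁ ∪ C₂, ViolatesLaman m n a b ((C₁ ∪ C₂).erase e) := by
  intro e he
  obtain ⟨S₁, T₁, hS₁, hT₁, hs₁, hc₁⟩ := minimal_struct h₁
  obtain ⟨S₂, T₂, hS₂, hT₂, hs₂, hc₂⟩ := minimal_struct h₂
  have hS := Finset.card_union_add_card_inter S₁ S₂
  have hT := Finset.card_union_add_card_inter T₁ T₂
  have hC := Finset.card_union_add_card_inter C₁ C₂
  have hSm : (S₁ ∪ S₂).card ≤ m := by simpa using Finset.card_le_univ (S₁ ∪ S₂)
  have hSi : a ≤ (S₁ ∩ S₂).card := by omega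
  have hSu : S₁.card ≤ (S₁ ∪ S₂).card := Finset.card_le_card Finset.subset_union_left
  have hTu : T₁.card ≤ (T₁ ∪ T₂).card := Finset.card_le_card Finset.subset_union_left
  have hsubi : C₁ ∩ C₂ ⊆ (S₁ ∩ S₂) ×ˢ (T₁ ∩ T₂) := by
    rw [Finset.product_inter_product.symm]
    exact Finset.inter_subset_inter hs₁ hs₂
  have hsubu : C₁ ∪ C₂ ⊆ (S₁ ∪ S₂) ×ˢ (T₁ ∪ T₂) :=
    Finset.union_subset
      (hs₁.trans (Finset.product_subset_product Finset.subset_union_left Finset.subset_union_left))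
      (hs₂.trans (Finset.product_subset_product Finset.subset_union_right
        Finset.subset_union_right))
  have hI : (C₁ ∩ C₂).card + a * b ≤ (S₁ ∩ S₂).card * b + (T₁ ∩ T₂).card * a := by
    by_cases hTi : b ≤ (T₁ ∩ T₂).card
    · have hnv : ¬ ViolatesLaman m n a b (C₁ ∩ C₂) := by
        by_cases hEq : C₁ ∩ C₂ = C₁
        · exact absurd h₁.1 (h₂.2 C₁ (lt_of_le_of_ne (Finset.inter_eq_left.mp hEq) hne))
        · exact h₁.2 _ (lt_of_le_of_ne Finset.inter_subset_left hEq)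
      by_contra hlt
      refine hnv ⟨_, _, hSi, hTi, ?_⟩
      rw [Finset.inter_eq_left.mpr hsubi]
      omega
    · have h := Finset.card_le_card hsubi
      rw [Finset.card_product] at h
      obtain ⟨x, hx⟩ := Nat.exists_eq_add_of_le hSi
      obtain ⟨y, hy⟩ := Nat.exists_eq_add_of_le (not_le.mp hTi).le
      generalize (T₁ ∩ T₂).card = t at *
      rw [hx] at h ⊢
      subst hy
      nlinarith [Nat.zero_le (x * y)]
  refine ⟨S₁ ∪ S₂, T₁ ∪ T₂, by omega, by omega, ?_⟩
  rw [Finset.inter_eq_left.mpr ((Finset.erase_subset _ _).trans hsubu),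
    Finset.card_erase_of_mem he]
  have e1 : (S₁ ∪ S₂).card * b + (S₁ ∩ S₂).card * b = S₁.card * b + S₂.card * b := by
    rw [← add_mul, hS, add_mul]
  have e2 : (T₁ ∪ T₂).card * a + (T₁ ∩ T₂).card * a = T₁.card * a + T₂.card * a := by
    rw [← add_mul, hT, add_mul]
  omega
end
end

section
/- Let 0 ≤ a ≤ m and 0 ≤ b ≤ n with m − a ≤ 2. A set C ⊆ [m]×[n] is a circuit of the bipartite rigidity matroid B_{m,n}(a,b) (i.e., a minimal set indexing linearly dependent columns of R_{m,n}(a,b)) if and only if C is a minimal Laman violator. -/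
open scoped Classical

noncomputable section

/-- The rational function field `ℚ(x_{pj}, y_{qℓ})` with `(p,j) ∈ [m]×[a]`,
`(q,ℓ) ∈ [n]×[b]`. -/
abbrev RField (m n a b : ℕ) :=
  FractionRing (MvPolynomial ((Fin m × Fin a) ⊕ (Fin n × Fin b)) ℚ)

/-- The column of the bipartite rigidity matrix `R_{m,n}(a,b)` labeled by
`e ∈ [m]×[n]`: the row labeled `(j,k) ∈ [a]×[n]` has entry `x_{e.1, j}` if `e.2 = k`
and `0` otherwise, and the row labeled `(ℓ,i) ∈ [b]×[m]` has entry `y_{e.2, ℓ}` if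
`e.1 = i` and `0` otherwise. -/
noncomputable def rigCol (m n a b : ℕ) (e : Fin m × Fin n) :
    (Fin a × Fin n) ⊕ (Fin b × Fin m) → RField m n a b := fun row =>
  match row with
  | Sum.inl (j, k) =>
      if e.2 = k then
        algebraMap (MvPolynomial ((Fin m × Fin a) ⊕ (Fin n × Fin b)) ℚ) (RField m n a b)
          (MvPolynomial.X (Sum.inl (e.1, j)))
      else 0
  | Sum.inr (l, i) =>
      if e.1 = i then
        algebraMap (MvPolynomial ((Fin m × Fin a) ⊕ (Fin n × Fin b)) ℚ) (RField m n a b)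
          (MvPolynomial.X (Sum.inr (e.2, l)))
      else 0

/-- `G` is independent in the bipartite rigidity matroid `B_{m,n}(a,b)`: the columns of
`R_{m,n}(a,b)` indexed by `G` are linearly independent. -/
def RigIndep (m n a b : ℕ) (G : Set (Fin m × Fin n)) : Prop :=
  LinearIndependent (RField m n a b) (fun e : G => rigCol m n a b e)

/-- `C` is a circuit of the bipartite rigidity matroid `B_{m,n}(a,b)`: a minimal set
indexing linearly dependent columns of `R_{m,n}(a,b)`. -/
def RigCircuit (m n a b : ℕ) (C : Finset (Fin m × Fin n)) : Prop :=
  ¬ RigIndep m n a b (↑C : Set (Fin m × Fin n)) ∧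
    ∀ D : Finset (Fin m × Fin n), D ⊂ C → RigIndep m n a b (↑D : Set (Fin m × Fin n))

def gCol {K : Type*} [Field K] {m n a b : ℕ} (x : Fin m → Fin a → K) (y : Fin n → Fin b → K)
    (e : Fin m × Fin n) : (Fin a × Fin n) ⊕ (Fin b × Fin m) → K := fun row =>
  match row with
  | Sum.inl (j, k) => if e.2 = k then x e.1 j else 0
  | Sum.inr (l, i) => if e.1 = i then y e.2 l else 0

lemma sum_gCol {K : Type*} [Field K] {m n a b : ℕ} (x : Fin m → Fin a → K) (y : Fin n → Fin b → K)
    (M : Fin m → Fin n → K) :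
    (∑ e : Fin m × Fin n, M e.1 e.2 • gCol x y e = 0) ↔
      ((∀ q j, ∑ p, x p j * M p q = 0) ∧ (∀ p l, ∑ q, M p q * y q l = 0)) := by
  rw [funext_iff]
  constructor
  · intro h
    constructor
    · intro q j
      have := h (Sum.inl (j, q))
      simpa [gCol, Fintype.sum_prod_type, mul_comm] using this
    · intro p l
      have := h (Sum.inr (l, p))
      rw [Finset.sum_apply, Fintype.sum_prod_type_right] at this
      simpa [gCol] using this
  · rintro ⟨h1, h2⟩ (⟨j, q⟩ | ⟨l, p⟩)
    · have := h1 q j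
      simpa [gCol, Fintype.sum_prod_type, mul_comm] using this
    · have := h2 p l
      rw [Finset.sum_apply, Fintype.sum_prod_type_right]
      simpa [gCol] using this

lemma sum_supp {ι K V : Type*} [Fintype ι] [Field K] [AddCommGroup V] [Module K V]
    (U : Finset ι) (M : ι → K) (hM : ∀ e, e ∉ U → M e = 0) (c : ι → V) :
    ∑ e : (↑U : Set ι), M e • c e = ∑ e, M e • c e := by
  rw [← Finset.sum_subset (Finset.subset_univ U)
    (fun e _ he => by rw [hM e he, zero_smul])]
  exact Finset.sum_coe_sort U (fun e => M e • c e)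

lemma gIndep_iff {K : Type*} [Field K] {m n a b : ℕ} (x : Fin m → Fin a → K)
    (y : Fin n → Fin b → K) (U : Finset (Fin m × Fin n)) :
    LinearIndependent K (fun e : (↑U : Set (Fin m × Fin n)) => gCol x y e) ↔
      ∀ M : Fin m → Fin n → K, (∀ p q, (p, q) ∉ U → M p q = 0) →
        (∀ q j, ∑ p, x p j * M p q = 0) → (∀ p l, ∑ q, M p q * y q l = 0) → M = 0 := by
  rw [Fintype.linearIndependent_iff]
  constructor
  · intro h M hM h1 h2
    have h3 := (sum_gCol x y M).2 ⟨h1, h2⟩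
    rw [← sum_supp U (fun e => M e.1 e.2) (fun e he => hM _ _ he)] at h3
    have h4 := h (fun e => M e.1.1 e.1.2) h3
    funext p q
    by_cases hpq : (p, q) ∈ U
    · exact h4 ⟨(p, q), hpq⟩
    · exact hM p q hpq
  · intro h g hg e
    let M : Fin m → Fin n → K := fun p q => if hpq : (p, q) ∈ U then g ⟨(p, q), hpq⟩ else 0
    have hM : ∀ p q, (p, q) ∉ U → M p q = 0 := fun p q hpq => by simp [M, hpq]
    have hg' : ∀ e : (↑U : Set (Fin m × Fin n)), g e = M e.1.1 e.1.2 := by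
      rintro ⟨⟨p, q⟩, he⟩
      have he' : (p, q) ∈ U := he
      simp [M, he']
    simp_rw [hg'] at hg
    rw [sum_supp U (fun e => M e.1 e.2) (fun e he => hM _ _ he), sum_gCol] at hg
    rw [hg', h M hM hg.1 hg.2]
    rfl

lemma ker_family {K ι : Type*} [Field K] [Fintype ι] {a : ℕ} (x : ι → Fin a → K)
    (S : Finset ι) : ∃ P : Fin (S.card - a) → ι → K, (∀ u i, i ∉ S → P u i = 0) ∧
      (∀ u j, ∑ i, x i j * P u i = 0) ∧ LinearIndependent K P := by
  let L : (ι → K) →ₗ[K] ((↥(Sᶜ) → K) × (Fin a → K)) :=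
    LinearMap.prod (LinearMap.funLeft K K (fun i : ↥(Sᶜ) => (i : ι)))
      (Matrix.mulVecLin (Matrix.of (fun j i => x i j)))
  have hL := L.finrank_range_add_finrank_ker
  have h1 := Submodule.finrank_le (LinearMap.range L)
  have hc : Sᶜ.card + S.card = Fintype.card ι := by
    rw [add_comm]; exact Finset.card_add_card_compl S
  rw [Module.finrank_prod, Module.finrank_fintype_fun_eq_card, Module.finrank_fintype_fun_eq_card,
    Fintype.card_coe, Fintype.card_fin] at h1
  rw [Module.finrank_fintype_fun_eq_card] at hL
  have hle : S.card - a ≤ Module.finrank K (LinearMap.ker L) := by omega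
  let B := Module.finBasis K (LinearMap.ker L)
  refine ⟨fun u => (B (Fin.castLE hle u) : ι → K), ?_, ?_, ?_⟩
  · intro u i hi
    have h2 : L (B (Fin.castLE hle u)) = 0 := (B (Fin.castLE hle u)).2
    have h3 := congrFun (congrArg Prod.fst h2) ⟨i, by simpa using hi⟩
    exact h3
  · intro u j
    have h2 : L (B (Fin.castLE hle u)) = 0 := (B (Fin.castLE hle u)).2
    have h3 := congrFun (congrArg Prod.snd h2) j
    exact h3
  · have h4 : LinearIndependent K (fun u => (B u : ι → K)) :=
      B.linearIndependent.map' (LinearMap.ker L).subtype (Submodule.ker_subtype _)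
    exact h4.comp _ (Fin.castLE_injective hle)

lemma dep_of_violates {K : Type*} [Field K] {m n a b : ℕ} (x : Fin m → Fin a → K)
    (y : Fin n → Fin b → K) (U : Finset (Fin m × Fin n)) (hU : ViolatesLaman m n a b U) :
    ∃ M : Fin m → Fin n → K, (∀ p q, (p, q) ∉ U → M p q = 0) ∧
        (∀ q j, ∑ p, x p j * M p q = 0) ∧ (∀ p l, ∑ q, M p q * y q l = 0) ∧ M ≠ 0 := by
  obtain ⟨S, T, hS, hT, hlt⟩ := hU
  obtain ⟨P, hP1, hP2, hP3⟩ := ker_family x S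
  obtain ⟨Q, hQ1, hQ2, hQ3⟩ := ker_family y T
  let Z : Finset (Fin m × Fin n) := (S ×ˢ T) \ U
  let Φ : ((Fin (S.card - a) × Fin (T.card - b)) → K) →ₗ[K] (↥Z → K) :=
    Matrix.mulVecLin (Matrix.of (fun z uv => P uv.1 z.1.1 * Q uv.2 z.1.2))
  have hcard : Z.card < (S.card - a) * (T.card - b) := by
    have h1 : Z.card + (U ∩ S ×ˢ T).card = S.card * T.card := by
      rw [← Finset.card_product, Finset.inter_comm]
      exact Finset.card_sdiff_add_card_inter _ _
    obtain ⟨s, hs⟩ := Nat.exists_eq_add_of_le hS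
    obtain ⟨t, ht⟩ := Nat.exists_eq_add_of_le hT
    have hs' : S.card - a = s := by omega
    have ht' : T.card - b = t := by omega
    rw [hs', ht']
    rw [hs, ht] at hlt h1
    nlinarith
  have hker : LinearMap.ker Φ ≠ ⊥ := by
    apply LinearMap.ker_ne_bot_of_finrank_lt
    simpa [Module.finrank_fintype_fun_eq_card] using hcard
  obtain ⟨N, hN, hN0⟩ := Submodule.exists_mem_ne_zero_of_ne_bot hker
  refine ⟨fun p q => ∑ u, (∑ v, N (u, v) * Q v q) * P u p, ?_, ?_, ?_, ?_⟩
  · intro p q hpq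
    by_cases hp : p ∈ S
    · by_cases hq : q ∈ T
      · have h1 := congrFun (LinearMap.mem_ker.1 hN) ⟨(p, q), by simp [Z, hp, hq, hpq]⟩
        simp only [Φ, Matrix.mulVecLin_apply, Matrix.mulVec, dotProduct, Matrix.of_apply,
          Fintype.sum_prod_type, Pi.zero_apply] at h1
        rw [← h1]
        refine Finset.sum_congr rfl fun u _ => ?_
        rw [Finset.sum_mul]
        exact Finset.sum_congr rfl fun v _ => by ring
      · simp [hQ1 _ q hq]
    · simp [hP1 _ p hp]
  · intro q j
    simp_rw [Finset.mul_sum]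
    rw [Finset.sum_comm]
    refine Finset.sum_eq_zero fun u _ => ?_
    have := hP2 u j
    calc _ = (∑ v, N (u, v) * Q v q) * ∑ i, x i j * P u i := by
          rw [Finset.mul_sum]; exact Finset.sum_congr rfl fun v _ => by ring
      _ = 0 := by rw [this, mul_zero]
  · intro p l
    simp_rw [Finset.sum_mul]
    rw [Finset.sum_comm]
    refine Finset.sum_eq_zero fun u _ => ?_
    rw [Finset.sum_comm]
    refine Finset.sum_eq_zero fun v _ => ?_
    calc _ = N (u, v) * P u p * ∑ i, y i l * Q v i := by
          rw [Finset.mul_sum]; exact Finset.sum_congr rfl fun v _ => by ring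
      _ = 0 := by rw [hQ2, mul_zero]
  · intro h0
    apply hN0
    rw [Fintype.linearIndependent_iff] at hP3 hQ3
    funext ⟨u, v⟩
    refine hQ3 (fun v => N (u, v)) ?_ v
    funext q
    have := hP3 (fun u => ∑ v, N (u, v) * Q v q) (by
      funext p
      have := congrFun (congrFun h0 p) q
      simpa using this) u
    simpa using this

lemma specialize_indep_s9 {R K ρ γ : Type*} [CommRing R] [IsDomain R] [Field K] [Algebra R K]
    [IsFractionRing R K] [Algebra ℚ R] (φ : R →ₐ[ℚ] ℚ) [Fintype ρ] [Fintype γ]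
    (A : Matrix ρ γ R)
    (h : LinearIndependent ℚ (A.map φ).col) : LinearIndependent K (A.map (algebraMap R K)).col := by
  rw [← Matrix.mulVec_injective_iff] at h ⊢
  obtain ⟨g, hg⟩ := ((A.map φ).mulVecLin).exists_leftInverse_of_injective
    (LinearMap.ker_eq_bot.2 h)
  let B := LinearMap.toMatrix' g
  have hB : B * A.map φ = 1 := by
    have := congrArg LinearMap.toMatrix' hg
    rwa [LinearMap.toMatrix'_comp, LinearMap.toMatrix'_id, ← Matrix.toLin'_apply',
      LinearMap.toMatrix'_toLin'] at this
  let B' : Matrix γ ρ R := B.map (algebraMap ℚ R)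
  have hB' : (B' * A).map φ = 1 := by
    rw [Matrix.map_mul, ← hB]
    congr 1
    ext i j
    simp [B']
  have hdet : (B' * A).det ≠ 0 := by
    intro h0
    have h1 := congrArg φ h0
    rw [AlgHom.map_det, AlgHom.mapMatrix_apply, hB'] at h1
    simp at h1
  have hdet' : ((B' * A).map (algebraMap R K)).det ≠ 0 := by
    rw [← RingHom.mapMatrix_apply, ← RingHom.map_det]
    exact fun h0 => hdet ((IsFractionRing.injective R K) (by rw [h0, map_zero]))
  have hinj := Matrix.mulVec_injective_of_det_ne_zero hdet'
  intro v w hvw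
  apply hinj
  simp only [Matrix.map_mul, ← Matrix.mulVec_mulVec]
  exact congrArg _ hvw

lemma vandermonde_supp {m a : ℕ} (v : Fin m → ℚ) (W : Finset (Fin m)) (hW : W.card ≤ a)
    (hv : ∀ p, p ∉ W → v p = 0) (h : ∀ j : Fin a, ∑ p : Fin m, ((p : ℕ) : ℚ) ^ (j : ℕ) * v p = 0) :
    v = 0 := by
  let e := W.equivFin
  have hinj : Function.Injective (fun k => (((e.symm k : Fin m) : ℕ) : ℚ)) := by
    intro k k' hk
    have : ((e.symm k : Fin m) : ℕ) = ((e.symm k' : Fin m) : ℕ) := by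
      have hk2 : (((e.symm k : Fin m) : ℕ) : ℚ) = (((e.symm k' : Fin m) : ℕ) : ℚ) := hk
      exact_mod_cast hk2
    exact e.symm.injective (Subtype.ext (Fin.ext this))
  have h0 := Matrix.eq_zero_of_forall_pow_sum_mul_pow_eq_zero
    (v := fun k => v (e.symm k)) hinj (by
      intro i
      have h1 := h ⟨i, lt_of_lt_of_le i.2 hW⟩
      rw [← Finset.sum_subset (Finset.subset_univ W)
        (fun p _ hp => by rw [hv p hp, mul_zero]), ← Finset.sum_coe_sort,
        ← e.symm.sum_comp] at h1
      rw [← h1]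
      exact Finset.sum_congr rfl fun k _ => mul_comm _ _)
  funext p
  by_cases hp : p ∈ W
  · have := congrFun h0 (e ⟨p, hp⟩)
    simpa using this
  · exact hv p hp

lemma rank_exists {n m : ℕ} (N : Finset (Fin n)) (g : Fin n → Fin m) :
    ∃ r : Fin n → ℕ, (∀ j ∈ N, r j < N.card) ∧ (∀ j ∈ N, ∀ j' ∈ N, r j = r j' → j = j') ∧
      (∀ j ∈ N, ∀ j' ∈ N, g j = g j' → r j' < r j + (N.filter (fun k => g k = g j)).card) := by
  let A : Fin m → ℕ := fun i => (N.filter (fun k => g k < i)).card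
  let c : Fin m → ℕ := fun i => (N.filter (fun k => g k = i)).card
  let d : Fin n → ℕ := fun j => (N.filter (fun k => g k = g j ∧ k < j)).card
  have hAc : ∀ i, A i + c i = (N.filter (fun k => g k ≤ i)).card := by
    intro i
    rw [← Finset.card_union_of_disjoint]
    · congr 1
      ext k
      simp only [Finset.mem_union, Finset.mem_filter, le_iff_lt_or_eq]
      tauto
    · rw [Finset.disjoint_left]
      intro k hk hk'
      simp only [Finset.mem_filter] at hk hk'
      exact absurd hk'.2 hk.2.ne
  have hAcN : ∀ i, A i + c i ≤ N.card := fun i => by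
    rw [hAc]; exact Finset.card_filter_le _ _
  have hAA : ∀ i i', i < i' → A i + c i ≤ A i' := fun i i' hii => by
    rw [hAc]
    apply Finset.card_le_card
    intro k
    simp only [Finset.mem_filter]
    exact fun hk => ⟨hk.1, lt_of_le_of_lt hk.2 hii⟩
  have hd : ∀ j ∈ N, d j < c (g j) := fun j hj => by
    apply Finset.card_lt_card
    rw [Finset.ssubset_iff_of_subset]
    · exact ⟨j, by simp [hj], by simp⟩
    · intro k
      simp only [Finset.mem_filter]
      tauto
  have hdd : ∀ j ∈ N, ∀ j', g j = g j' → j < j' → d j < d j' := fun j hj j' hg hjj => by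
    apply Finset.card_lt_card
    rw [Finset.ssubset_iff_of_subset]
    · exact ⟨j, by simp [hj, hg, hjj], by simp⟩
    · intro k
      simp only [Finset.mem_filter, hg]
      exact fun hk => ⟨hk.1, hk.2.1, hk.2.2.trans hjj⟩
  refine ⟨fun j => A (g j) + d j, ?_, ?_, ?_⟩
  · intro j hj
    have := hd j hj
    have := hAcN (g j)
    show A (g j) + d j < _
    omega
  · intro j hj j' hj' h
    change A (g j) + d j = A (g j') + d j' at h
    have h1 := hd j hj
    have h2 := hd j' hj'
    rcases lt_trichotomy (g j) (g j') with h3 | h3 | h3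
    · have := hAA _ _ h3; omega
    · rw [h3] at h
      rcases lt_trichotomy j j' with h4 | h4 | h4
      · have := hdd j hj j' h3 h4; omega
      · exact h4
      · have := hdd j' hj' j h3.symm h4; omega
    · have := hAA _ _ h3; omega
  · intro j hj j' hj' h
    have h2 := hd j' hj'
    show A (g j') + d j' < A (g j) + d j + c (g j)
    rw [← h] at h2 ⊢
    omega

lemma coloring {n m b : ℕ} (F N : Finset (Fin n)) (hFN : Disjoint F N) (g : Fin n → Fin m)
    (h1 : 2 * F.card + N.card ≤ 2 * b)
    (h2 : ∀ i, F.card + (N.filter (fun k => g k = i)).card ≤ b) :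
    ∃ c : Fin n → ℕ, (∀ j ∈ F ∪ N, c j < b) ∧
      (∀ j ∈ F ∪ N, ∀ j' ∈ F ∪ N, j ≠ j' → c j = c j' → j ∈ N ∧ j' ∈ N ∧ g j ≠ g j') ∧
      (∀ j ∈ F ∪ N, ∀ j' ∈ F ∪ N, ∀ j'' ∈ F ∪ N, j ≠ j' → j ≠ j'' → j' ≠ j'' →
        c j = c j' → c j = c j'' → False) := by
  obtain ⟨r, hr1, hr2, hr3⟩ := rank_exists N g
  obtain ⟨s, hs1, hs2⟩ : ∃ s : Fin n → ℕ, (∀ j ∈ F, s j < F.card) ∧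
      (∀ j ∈ F, ∀ j' ∈ F, s j = s j' → j = j') := by
    refine ⟨fun j => if hj : j ∈ F then (F.equivFin ⟨j, hj⟩ : ℕ) else 0, ?_, ?_⟩
    · intro j hj
      simp only [hj, dite_true]
      exact Fin.is_lt _
    · intro j hj j' hj' h
      simp only [hj, hj', dite_true] at h
      simpa using F.equivFin.injective (Fin.ext h)
  have hdis : ∀ j, j ∈ F → j ∉ N := fun j hj => Finset.disjoint_left.1 hFN hj
  let c : Fin n → ℕ := fun j => if j ∈ F then b - F.card + s j else
    if r j < b - F.card then r j else r j - (b - F.card)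
  have hcF : ∀ j ∈ F, c j = b - F.card + s j := fun j hj => by simp [c, hj]
  have hcN : ∀ j ∈ N, (r j < b - F.card ∧ c j = r j) ∨
      (b - F.card ≤ r j ∧ c j = r j - (b - F.card)) := fun j hj => by
    have : j ∉ F := fun h => hdis j h hj
    by_cases h : r j < b - F.card
    · left; simp [c, this, h]
    · right; simp only [c, this, h, if_false]; exact ⟨by omega, trivial⟩
  have key : ∀ j ∈ F ∪ N, ∀ j' ∈ F ∪ N, j ≠ j' → c j = c j' →
      j ∈ N ∧ j' ∈ N ∧ (r j' = r j + (b - F.card) ∨ r j = r j' + (b - F.card)) := by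
    intro j hj j' hj' hne hc
    rw [Finset.mem_union] at hj hj'
    rcases hj with hj | hj <;> rcases hj' with hj' | hj'
    · exact absurd (hs2 j hj j' hj' (by have := hcF j hj; have := hcF j' hj'; omega)) hne
    · have := hcF j hj; have := hcN j' hj'; have := hr1 j' hj'; omega
    · have := hcF j' hj'; have := hcN j hj; have := hr1 j hj; omega
    · refine ⟨hj, hj', ?_⟩
      have h3 : r j ≠ r j' := fun h => hne (hr2 j hj j' hj' h)
      have := hcN j hj; have := hcN j' hj'
      omega
  refine ⟨c, ?_, ?_, ?_⟩
  · intro j hj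
    rw [Finset.mem_union] at hj
    rcases hj with hj | hj
    · have := hcF j hj; have := hs1 j hj; omega
    · have := hcN j hj; have := hr1 j hj; omega
  · intro j hj j' hj' hne hc
    obtain ⟨k1, k2, k3⟩ := key j hj j' hj' hne hc
    refine ⟨k1, k2, fun hg => ?_⟩
    have e1 := hr3 j k1 j' k2 hg
    have e2 := hr3 j' k2 j k1 hg.symm
    have e3 := h2 (g j)
    have e4 := h2 (g j')
    omega
  · intro j hj j' hj' j'' hj'' n1 n2 n3 c1 c2
    obtain ⟨k1, k2, k3⟩ := key j hj j' hj' n1 c1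
    obtain ⟨-, k4, k5⟩ := key j hj j'' hj'' n2 c2
    obtain ⟨-, -, k6⟩ := key j' hj' j'' hj'' n3 (c1.symm.trans c2)
    have := hr1 j k1
    have := hr1 j' k2
    have := hr1 j'' k4
    omega

/-- the support of column `q` -/
def sup {m n : ℕ} (U : Finset (Fin m × Fin n)) (q : Fin n) : Finset (Fin m) :=
  Finset.univ.filter (fun p => (p, q) ∈ U)

lemma card_sup {m n : ℕ} (U : Finset (Fin m × Fin n)) (S : Finset (Fin m)) (T : Finset (Fin n)) :
    (U ∩ S ×ˢ T).card = ∑ q ∈ T, (sup U q ∩ S).card := by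
  rw [Finset.card_eq_sum_card_fiberwise (f := Prod.snd) (t := T)]
  · refine Finset.sum_congr rfl fun q hq => ?_
    refine Finset.card_bij' (fun e _ => e.1) (fun p _ => (p, q)) ?_ ?_ ?_ ?_
    · rintro ⟨p, q'⟩ h
      simp only [Finset.mem_filter, Finset.mem_inter, Finset.mem_product, sup, Finset.mem_univ,
        true_and] at h ⊢
      obtain ⟨h, rfl⟩ := h
      tauto
    · intro p h
      simp only [Finset.mem_filter, Finset.mem_inter, Finset.mem_product, sup, Finset.mem_univ,
        true_and] at h ⊢
      tauto
    · rintro ⟨p, q'⟩ h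
      simp only [Finset.mem_filter] at h
      rw [h.2]
    · intro p h; rfl
  · rintro ⟨p, q⟩ h
    simp only [Finset.coe_inter, Set.mem_inter_iff, Finset.mem_coe, Finset.mem_product] at h ⊢
    exact h.2.2

lemma good_coloring {m n a b : ℕ} (hma : m ≤ a + 2) (ha : a ≤ m)
    (U : Finset (Fin m × Fin n)) (hU : ¬ ViolatesLaman m n a b U) :
    ∃ c : Fin n → ℕ, (∀ j, a < (sup U j).card → c j < b) ∧
      (∀ j j', a < (sup U j).card → a < (sup U j').card → j ≠ j' → c j = c j' →
        (sup U j ∩ sup U j').card ≤ a) ∧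
      (∀ j j' j'', a < (sup U j).card → a < (sup U j').card → a < (sup U j'').card →
        j ≠ j' → j ≠ j'' → j' ≠ j'' → c j = c j' → c j = c j'' → False) := by
  have hle : ∀ j, (sup U j).card ≤ m := fun j => by
    simpa using Finset.card_le_univ (sup U j)
  have hV : ∀ (S : Finset (Fin m)) (T : Finset (Fin n)), a ≤ S.card → b ≤ T.card →
      ∑ q ∈ T, (sup U q ∩ S).card + a * b ≤ S.card * b + T.card * a := by
    intro S T hS hT
    rw [← card_sup]
    by_contra h
    exact hU ⟨S, T, hS, hT, by omega⟩
  rcases Nat.eq_or_lt_of_le ha with h0 | h0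
  · have : ∀ j, ¬ a < (sup U j).card := fun j => by have := hle j; omega
    exact ⟨fun _ => 0, fun j h => absurd h (this j), fun j _ h => absurd h (this j),
      fun j _ _ h => absurd h (this j)⟩
  have hm0 : 0 < m := by omega
  -- full columns and columns missing one
  let F := Finset.univ.filter (fun j => a < (sup U j).card ∧ (sup U j).card = m)
  let N := Finset.univ.filter (fun j => a < (sup U j).card ∧ (sup U j).card ≠ m)
  have hFN : Disjoint F N := by
    rw [Finset.disjoint_left]
    intro j hj hj'
    simp only [F, N, Finset.mem_filter] at hj hj'
    exact hj'.2.2 hj.2.2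
  have hFu : ∀ j ∈ F, sup U j = Finset.univ := fun j hj => by
    simp only [F, Finset.mem_filter] at hj
    exact Finset.eq_univ_of_card _ (by simpa using hj.2.2)
  have hmem : ∀ j, a < (sup U j).card → j ∈ F ∪ N := fun j hj => by
    simp only [F, N, Finset.mem_union, Finset.mem_filter, Finset.mem_univ, true_and, hj]
    tauto
  have hmem' : ∀ j ∈ N, m = a + 2 ∧ (sup U j).card = a + 1 := fun j hj => by
    simp only [N, Finset.mem_filter, Finset.mem_univ, true_and] at hj
    have := hle j
    omega
  have hg : ∀ j : Fin n, ∃ i : Fin m, j ∈ N → sup U j = {i}ᶜ := by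
    intro j
    by_cases hj : j ∈ N
    · obtain ⟨e1, e2⟩ := hmem' j hj
      have h3 : (sup U j)ᶜ.card = 1 := by
        rw [Finset.card_compl, Fintype.card_fin]; omega
      obtain ⟨i, hi⟩ := Finset.card_eq_one.1 h3
      exact ⟨i, fun _ => by rw [← hi, compl_compl]⟩
    · exact ⟨⟨0, hm0⟩, fun h => absurd h hj⟩
  choose g hg using hg
  have hFm : ∀ j ∈ F, (sup U j ∩ Finset.univ).card = m := fun j hj => by
    rw [hFu j hj]; simp
  have hNm : ∀ j ∈ N, (sup U j ∩ Finset.univ).card = a + 1 := fun j hj => by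
    rw [Finset.inter_univ]; exact (hmem' j hj).2
  have h1 : 2 * F.card + N.card ≤ 2 * b := by
    by_cases hb : b ≤ (F ∪ N).card
    · have h3 := hV Finset.univ (F ∪ N) (by simpa using ha) hb
      rw [Finset.sum_union hFN, Finset.sum_congr rfl hFm, Finset.sum_congr rfl hNm,
        Finset.card_union_of_disjoint hFN] at h3
      simp only [Finset.sum_const, smul_eq_mul, Finset.card_univ, Fintype.card_fin] at h3
      rcases (by omega : m = a + 1 ∨ m = a + 2) with h4 | h4
      · have : N.card = 0 := by
          rw [Finset.card_eq_zero, Finset.eq_empty_iff_forall_notMem]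
          intro j hj
          have := (hmem' j hj).1
          omega
        rw [h4, this] at h3
        rw [this]
        nlinarith
      · rw [h4] at h3
        nlinarith
    · rw [Finset.card_union_of_disjoint hFN] at hb
      omega
  have h2 : ∀ i, F.card + (N.filter (fun k => g k = i)).card ≤ b := by
    intro i
    by_cases hN : N.filter (fun k => g k = i) = ∅
    · rw [hN]; simp; omega
    obtain ⟨j0, hj0⟩ := Finset.nonempty_iff_ne_empty.2 hN
    have hm2 := (hmem' j0 (Finset.mem_filter.1 hj0).1).1
    by_contra hb
    have hd : Disjoint F (N.filter (fun k => g k = i)) :=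
      Finset.disjoint_of_subset_right (Finset.filter_subset _ _) hFN
    have hci : ({i}ᶜ : Finset (Fin m)).card = a + 1 := by
      rw [Finset.card_compl, Fintype.card_fin, Finset.card_singleton]; omega
    have h3 := hV {i}ᶜ (F ∪ N.filter (fun k => g k = i)) (by omega)
      (by rw [Finset.card_union_of_disjoint hd]; omega)
    have h4 : ∀ q ∈ F ∪ N.filter (fun k => g k = i), (sup U q ∩ {i}ᶜ).card = a + 1 := by
      intro q hq
      rw [← hci]
      rcases Finset.mem_union.1 hq with hq | hq
      · rw [hFu q hq, Finset.univ_inter]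
      · rw [hg q (Finset.mem_filter.1 hq).1, (Finset.mem_filter.1 hq).2, Finset.inter_self]
    rw [Finset.sum_congr rfl h4, Finset.sum_const, smul_eq_mul, hci,
      Finset.card_union_of_disjoint hd] at h3
    nlinarith
  obtain ⟨c, hc1, hc2, hc3⟩ := coloring F N hFN g h1 h2
  refine ⟨c, fun j hj => hc1 j (hmem j hj), ?_, ?_⟩
  · intro j j' hj hj' hne hc
    obtain ⟨k1, k2, k3⟩ := hc2 j (hmem j hj) j' (hmem j' hj') hne hc
    obtain ⟨e1, e2⟩ := hmem' j k1
    have : sup U j ∩ sup U j' = ({g j, g j'} : Finset (Fin m))ᶜ := by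
      rw [hg j k1, hg j' k2]
      ext p
      simp
    rw [this, Finset.card_compl, Fintype.card_fin, Finset.card_pair k3]
    omega
  · intro j j' j'' hj hj' hj''
    exact hc3 j (hmem j hj) j' (hmem j' hj') j'' (hmem j'' hj'')

lemma rat_indep {m n a b : ℕ} (hma : m ≤ a + 2) (ha : a ≤ m)
    (U : Finset (Fin m × Fin n)) (hU : ¬ ViolatesLaman m n a b U) :
    ∃ (x : Fin m → Fin a → ℚ) (y : Fin n → Fin b → ℚ),
      LinearIndependent ℚ (fun e : (↑U : Set (Fin m × Fin n)) => gCol x y e) := by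
  obtain ⟨c, hc1, hc2, hc3⟩ := good_coloring hma ha U hU
  refine ⟨fun p j => ((p : ℕ) : ℚ) ^ (j : ℕ),
    fun q l => if c q = (l : ℕ) then 1 else 0, ?_⟩
  rw [gIndep_iff]
  intro M hM h1 h2
  have hsupp : ∀ p q, p ∉ sup U q → M p q = 0 := fun p q h =>
    hM p q (by simpa [sup] using h)
  have hsmall : ∀ q, ¬ a < (sup U q).card → ∀ p, M p q = 0 := fun q hq p =>
    congrFun (vandermonde_supp (fun p => M p q) (sup U q) (by omega) (fun p hp => hsupp p q hp)
      (fun j => h1 q j)) p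
  funext p q
  show M p q = 0
  by_cases hq : a < (sup U q).card
  swap
  · exact hsmall q hq p
  have h3 : ∀ p, ∑ k, M p k * (if c k = c q then 1 else 0) = 0 := fun p =>
    h2 p ⟨c q, hc1 q hq⟩
  by_cases hex : ∃ q', a < (sup U q').card ∧ q ≠ q' ∧ c q = c q'
  · obtain ⟨q', hq', hne, hcc⟩ := hex
    have h4 : ∀ p, M p q + M p q' = 0 := by
      intro p
      rw [← h3 p, Finset.sum_eq_add q q' hne]
      · simp [hcc]
      · rintro k - ⟨hk, hk'⟩
        by_cases hka : a < (sup U k).card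
        · by_cases hkc : c k = c q
          · exact (hc3 q q' k hq hq' hka hne (Ne.symm hk) (Ne.symm hk') hcc hkc.symm).elim
          · simp [hkc]
        · rw [hsmall k hka, zero_mul]
      · simp
      · simp
    refine congrFun (vandermonde_supp (fun p => M p q) (sup U q ∩ sup U q')
      (hc2 q q' hq hq' hne hcc) ?_ (fun j => h1 q j)) p
    intro p hp
    rw [Finset.mem_inter, not_and_or] at hp
    rcases hp with hp | hp
    · exact hsupp p q hp
    · have := h4 p
      rw [hsupp p q' hp, add_zero] at this
      exact this
  · push Not at hex
    have h4 := h3 p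
    rw [Finset.sum_eq_single q] at h4
    · simpa using h4
    · intro k _ hk
      by_cases hka : a < (sup U k).card
      · have := hex k hka (Ne.symm hk)
        simp [Ne.symm this]
      · rw [hsmall k hka, zero_mul]
    · simp

lemma rigCol_eq (m n a b : ℕ) : rigCol m n a b =
    gCol (fun p j => algebraMap (MvPolynomial ((Fin m × Fin a) ⊕ (Fin n × Fin b)) ℚ) (RField m n a b)
          (MvPolynomial.X (Sum.inl (p, j))))
      (fun q l => algebraMap (MvPolynomial ((Fin m × Fin a) ⊕ (Fin n × Fin b)) ℚ) (RField m n a b)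
          (MvPolynomial.X (Sum.inr (q, l)))) := by
  funext e row
  rcases row with ⟨j, k⟩ | ⟨l, i⟩ <;> rfl

lemma rigIndep_iff (m n a b : ℕ) (ha : a ≤ m) (hma : m ≤ a + 2) (U : Finset (Fin m × Fin n)) :
    RigIndep m n a b (↑U : Set (Fin m × Fin n)) ↔ ¬ ViolatesLaman m n a b U := by
  constructor
  · intro h hU
    unfold RigIndep at h
    rw [rigCol_eq, gIndep_iff] at h
    obtain ⟨M, h1, h2, h3, h4⟩ := dep_of_violates (K := RField m n a b) _ _ U hU
    exact h4 (h M h1 h2 h3)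
  · intro hU
    obtain ⟨x, y, hxy⟩ := rat_indep hma ha U hU
    let φ : MvPolynomial ((Fin m × Fin a) ⊕ (Fin n × Fin b)) ℚ →ₐ[ℚ] ℚ :=
      MvPolynomial.aeval (Sum.elim (fun pj => x pj.1 pj.2) (fun ql => y ql.1 ql.2))
    let A : Matrix ((Fin a × Fin n) ⊕ (Fin b × Fin m)) (↑U : Set (Fin m × Fin n))
        (MvPolynomial ((Fin m × Fin a) ⊕ (Fin n × Fin b)) ℚ) := fun row e =>
      match row with
      | Sum.inl (j, k) => if e.1.2 = k then MvPolynomial.X (Sum.inl (e.1.1, j)) else 0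
      | Sum.inr (l, i) => if e.1.1 = i then MvPolynomial.X (Sum.inr (e.1.2, l)) else 0
    have h1 : (A.map φ).col = (fun e : (↑U : Set (Fin m × Fin n)) => gCol x y e) := by
      funext e row
      rcases row with ⟨j, k⟩ | ⟨l, i⟩
      · change φ (if e.1.2 = k then MvPolynomial.X (Sum.inl (e.1.1, j)) else 0) =
          if e.1.2 = k then x e.1.1 j else 0
        split_ifs <;> simp [φ]
      · change φ (if e.1.1 = i then MvPolynomial.X (Sum.inr (e.1.2, l)) else 0) =
          if e.1.1 = i then y e.1.2 l else 0
        split_ifs <;> simp [φ]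
    have h2 : (A.map (algebraMap _ (RField m n a b))).col =
        (fun e : (↑U : Set (Fin m × Fin n)) => rigCol m n a b e) := by
      funext e row
      rcases row with ⟨j, k⟩ | ⟨l, i⟩
      · change algebraMap (MvPolynomial ((Fin m × Fin a) ⊕ (Fin n × Fin b)) ℚ) (RField m n a b)
            (if e.1.2 = k then MvPolynomial.X (Sum.inl (e.1.1, j)) else 0) =
          if e.1.2 = k then algebraMap (MvPolynomial ((Fin m × Fin a) ⊕ (Fin n × Fin b)) ℚ) (RField m n a b)
            (MvPolynomial.X (Sum.inl (e.1.1, j))) else 0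
        split_ifs
        · rfl
        · exact map_zero _
      · change algebraMap (MvPolynomial ((Fin m × Fin a) ⊕ (Fin n × Fin b)) ℚ) (RField m n a b)
            (if e.1.1 = i then MvPolynomial.X (Sum.inr (e.1.2, l)) else 0) =
          if e.1.1 = i then algebraMap (MvPolynomial ((Fin m × Fin a) ⊕ (Fin n × Fin b)) ℚ) (RField m n a b)
            (MvPolynomial.X (Sum.inr (e.1.2, l))) else 0
        split_ifs
        · rfl
        · exact map_zero _
    unfold RigIndep
    rw [← h2]
    exact specialize_indep_s9 φ A (h1 ▸ hxy)

theorem circuits_eq_minimal_laman_violators (m n a b : ℕ) (ha : a ≤ m) (hb : b ≤ n)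
    (hma : m ≤ a + 2) (C : Finset (Fin m × Fin n)) :
    RigCircuit m n a b C ↔ MinimalLamanViolator m n a b C := by
  unfold RigCircuit MinimalLamanViolator
  simp only [rigIndep_iff m n a b ha hma, not_not]
end
end
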